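/- Let N ≥ 1 and p, q ≥ 1 be integers and set n = p + q. Let ψ_1, …, ψ_n and φ_1, …, φ_n be complex numbers such that Re φ_j < 0 for 1 ≤ j ≤ p, Re φ_l > 0 for p+1 ≤ l ≤ n, and such that e^{iψ_1}, …, e^{iψ_n} are pairwise distinct. Set λ_N = N·∑_{l=p+1}^{n} (iψ_l − φ_l). Then ∫_{U(N)} e^{λ_N} · ∏_{j=1}^{p} det(1_N − e^{iψ_j} u)/det(1_N − e^{φ_j} u) · ∏_{l=p+1}^{n} det(1_N − e^{−iψ_l} ū)/det(1_N − e^{−φ_l} ū) du = (1/(p!·q!)) · ∑_{w ∈ S_n} ∏_{l=p+1}^{n} e^{N(iψ_{w(l)} − φ_l)} · ∏_{j=1}^{p} [(1 − e^{φ_j − iψ_{w(l)}})(1 − e^{iψ_{w(j)} − φ_l})] / [(1 − e^{iψ_{w(j)} − iψ_{w(l)}})(1 − e^{φ_j − φ_l})]. -/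

import Mathlib

/-!
For a polynomial `P`, invariance of Haar measure under infinitesimal left translations gives
Schwinger-Dyson (loop) equations for the moments of `det P(u)` against `(det u)⁻ᴹ`. The
coefficients of the Weyl density on the torus satisfy the same equations, which have a
one-dimensional solution space; hence these moments are Toeplitz determinants in the coefficients
of `P`, with no appeal to the Weyl integration formula.

Expanding the denominators `det(1 - x j u)⁻¹` and `det(1 - y l u⁻¹)⁻¹` geometrically then turns the
average of the ratios into `det (ℓ i (X ^ j * ∏ k, (X - b k)))`, where `ℓ i` takes a Laurent
coefficient of the product with the symbol `∏ j (1 - x j t)⁻¹ ∏ l (1 - y l / t)⁻¹`. This determinant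
is a quotient: the functionals `ℓ i` together with evaluation at the `b k` are evaluated on the
monomials, and also on the shifts of `f = ∏ j (1 - x j X)` and `X ^ N * g`, `g = ∏ l (X - y l)`,
where the matrix becomes block triangular. The change of basis is the Sylvester matrix, so the
average times a Vandermonde determinant and a resultant is a determinant with two weighted
Vandermonde blocks, whose Laplace expansion is the sum over permutations.
-/

open MeasureTheory Matrix

noncomputable instance (N : ℕ) : MeasurableSpace (Matrix.unitaryGroup (Fin N) ℂ) := borel _
instance (N : ℕ) : BorelSpace (Matrix.unitaryGroup (Fin N) ℂ) := ⟨rfl⟩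

namespace CharpolyRatios

section DetDerivation

variable {R A n : Type*} [CommRing R] [CommRing A] [Algebra R A] [Fintype n] [DecidableEq n]

theorem derivation_prod {ι : Type*} [DecidableEq ι] (D : Derivation R A A) (s : Finset ι)
    (f : ι → A) : D (∏ i ∈ s, f i) = ∑ i ∈ s, (∏ k ∈ s.erase i, f k) * D (f i) := by
  induction s using Finset.induction_on with
  | empty => simp
  | insert a s ha ih =>
    rw [Finset.prod_insert ha, D.leibniz, ih, Finset.sum_insert ha, Finset.erase_insert ha,
      smul_eq_mul, smul_eq_mul, Finset.mul_sum, add_comm]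
    congr 1
    refine Finset.sum_congr rfl fun i hi => ?_
    have hai : a ≠ i := fun h => ha (h ▸ hi)
    rw [Finset.erase_insert_of_ne hai, Finset.prod_insert (by simp [ha]), mul_assoc]

theorem derivation_det (D : Derivation R A A) (B : Matrix n n A) :
    D B.det = ∑ i, (B.updateRow i fun j => D (B i j)).det := by
  have leibniz (σ : Equiv.Perm n) :
      D (∏ i, B i (σ i)) = ∑ i, ∏ k, B.updateRow i (fun j => D (B i j)) k (σ k) := by
    rw [derivation_prod]
    refine Finset.sum_congr rfl fun i _ => ?_
    rw [← Finset.prod_erase_mul _ _ (Finset.mem_univ i), updateRow_self]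
    congr 1
    exact Finset.prod_congr rfl fun k hk => by rw [updateRow_ne (Finset.ne_of_mem_erase hk)]
  have det_eq (C : Matrix n n A) : C.det = ∑ σ : Equiv.Perm n, σ.sign • ∏ i, C i (σ i) :=
    C.det_transpose.symm.trans (det_apply _)
  rw [det_eq, map_sum, Finset.sum_congr rfl fun i _ => det_eq _, Finset.sum_comm]
  refine Finset.sum_congr rfl fun σ _ => ?_
  rw [Units.smul_def, map_zsmul, leibniz, ← Finset.smul_sum, Units.smul_def]

theorem sum_det_updateRow_vecMul (B C : Matrix n n A) :
    ∑ i, (B.updateRow i (B.row i ᵥ* C)).det = C.trace * B.det := by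
  have expand (i : n) : (B.updateRow i (B.row i ᵥ* C)).det = (B * C * B.adjugate) i i := by
    rw [← cramer_transpose_apply, cramer_eq_adjugate_mulVec, ← adjugate_transpose,
      mulVec_transpose]
    rfl
  rw [Finset.sum_congr rfl fun i _ => expand i]
  change (B * C * B.adjugate).trace = _
  rw [trace_mul_comm, ← Matrix.mul_assoc, adjugate_mul, Matrix.smul_mul, Matrix.one_mul,
    trace_smul, smul_eq_mul, mul_comm]

end DetDerivation

section GenericMatrix

variable {n R : Type*} [CommRing R]

/-- The value of a polynomial in matrix entries at the matrix `B`. -/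
noncomputable def evalMatrix {A : Type*} [CommRing A] [Algebra R A]
    (B : Matrix n n A) : MvPolynomial (n × n) R →ₐ[R] A :=
  MvPolynomial.aeval fun p => B p.1 p.2

theorem map_evalMatrix {A B : Type*} [CommRing A] [CommRing B]
    [Algebra R A] [Algebra R B] (e : A →ₐ[R] B) (C : Matrix n n A) (f : MvPolynomial (n × n) R) :
    e (evalMatrix C f) = evalMatrix (C.map e) f :=
  MvPolynomial.comp_aeval_apply ..

theorem evalMatrix_mvPolynomialX {A : Type*} [CommRing A] [Algebra R A]
    (B : Matrix n n A) : (mvPolynomialX n n R).map (evalMatrix B) = B := by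
  ext i j; simp [evalMatrix, mvPolynomialX]

variable [Fintype n]

/-- The derivation of the ring of polynomial functions of a matrix `u` given by the infinitesimal
left translation `u ↦ u + t X u`. -/
noncomputable def leftTranslation (X : Matrix n n R) :
    Derivation R (MvPolynomial (n × n) R) (MvPolynomial (n × n) R) :=
  MvPolynomial.mkDerivation R fun p =>
    (X.map MvPolynomial.C * mvPolynomialX n n R : Matrix n n (MvPolynomial (n × n) R)) p.1 p.2

theorem evalMatrix_det [DecidableEq n] {A : Type*} [CommRing A]
    [Algebra R A] (B : Matrix n n A) : evalMatrix B (mvPolynomialX n n R).det = B.det := by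
  rw [AlgHom.map_det, AlgHom.mapMatrix_apply, evalMatrix_mvPolynomialX]

theorem leftTranslation_mvPolynomialX (X : Matrix n n R) :
    (mvPolynomialX n n R).map (leftTranslation X) =
      X.map MvPolynomial.C * mvPolynomialX n n R := by
  ext1 i j; simp [leftTranslation, mvPolynomialX]

theorem leftTranslation_add (X Y : Matrix n n R) :
    leftTranslation (X + Y) = leftTranslation X + leftTranslation Y :=
  MvPolynomial.derivation_ext fun p => by
    simp [leftTranslation, mul_apply, Finset.sum_add_distrib, add_mul]

theorem leftTranslation_smul (a : R) (X : Matrix n n R) :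
    leftTranslation (a • X) = a • leftTranslation X :=
  MvPolynomial.derivation_ext fun p => by
    simp [leftTranslation, mul_apply, Finset.mul_sum, MvPolynomial.smul_eq_C_mul, mul_assoc]

theorem leftTranslation_det [DecidableEq n] (X : Matrix n n R) :
    leftTranslation X (mvPolynomialX n n R).det =
      X.trace • (mvPolynomialX n n R).det := by
  have row (i : n) : (fun j => leftTranslation X (mvPolynomialX n n R i j)) =
      ∑ k, (MvPolynomial.C (X i k) : MvPolynomial (n × n) R) • mvPolynomialX n n R k := by
    ext1 j
    exact (congrFun₂ (leftTranslation_mvPolynomialX X) i j).trans (by simp [mul_apply])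
  simp_rw [derivation_det, row, det_updateRow_sum, trace, Finset.sum_smul, diag_apply,
    MvPolynomial.smul_eq_C_mul, smul_eq_mul]

end GenericMatrix

section Invariance

theorem hasDerivAt_aeval {σ A : Type*} [NormedCommRing A] [NormedAlgebra ℝ A] [Algebra ℂ A]
    {g : σ → MvPolynomial σ ℂ} {c : ℝ → σ → A} {t : ℝ}
    (hc : ∀ i, HasDerivAt (fun s => c s i) (MvPolynomial.aeval (c t) (g i)) t)
    (f : MvPolynomial σ ℂ) :
    HasDerivAt (fun s => MvPolynomial.aeval (c s) f)
      (MvPolynomial.aeval (c t) (MvPolynomial.mkDerivation ℂ g f)) t := by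
  induction f using MvPolynomial.induction_on with
  | C a => simpa using hasDerivAt_const t (algebraMap ℂ A a)
  | add f₁ f₂ h₁ h₂ => convert! h₁.add h₂ using 1 <;> first | (ext s; simp) | simp
  | mul_X f i h =>
    convert! h.mul (hc i) using 1
    · ext s; simp
    · simp only [Derivation.leibniz, MvPolynomial.mkDerivation_X, smul_eq_mul, map_add, map_mul,
        MvPolynomial.aeval_X]
      ring

/-- Integration against a finite measure, as a functional on continuous functions. -/
noncomputable def integralFunctional {X : Type*} [TopologicalSpace X] [CompactSpace X]
    [MeasurableSpace X] [BorelSpace X] (μ : Measure X) [IsFiniteMeasure μ] : C(X, ℂ) →L[ℂ] ℂ :=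
  have integrable (f : C(X, ℂ)) : Integrable f μ :=
    f.continuous.integrable_of_hasCompactSupport (HasCompactSupport.of_compactSpace f)
  LinearMap.mkContinuous
    { toFun f := ∫ x, f x ∂μ
      map_add' f g := integral_add (integrable f) (integrable g)
      map_smul' a f := integral_const_mul a f }
    (μ.real Set.univ) fun f => by
      rw [mul_comm]
      exact norm_integral_le_of_norm_le_const (.of_forall f.norm_coe_le_norm)

variable {N : ℕ}

instance : CompactSpace (unitaryGroup (Fin N) ℂ) := by
  let box : Set (Matrix (Fin N) (Fin N) ℂ) :=
    Set.univ.pi fun _ => Set.univ.pi fun _ => Metric.closedBall 0 1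
  have isCompact_box : IsCompact box :=
    isCompact_univ_pi fun _ => isCompact_univ_pi fun _ => isCompact_closedBall 0 1
  refine isCompact_iff_compactSpace.mp (isCompact_box.of_isClosed_subset ?_ fun A hA i _ j _ => ?_)
  · have : (unitaryGroup (Fin N) ℂ : Set (Matrix (Fin N) (Fin N) ℂ)) = {A | A * star A = 1} :=
      Set.ext fun _ => mem_unitaryGroup_iff
    change IsClosed (unitaryGroup (Fin N) ℂ : Set (Matrix (Fin N) (Fin N) ℂ))
    rw [this]
    exact isClosed_eq (by fun_prop) continuous_const
  · simpa using entry_norm_bound_of_unitary hA i j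

/-- The matrix of coordinate functions on the unitary group. -/
noncomputable def unitaryCoord (N : ℕ) : Matrix (Fin N) (Fin N) C(unitaryGroup (Fin N) ℂ, ℂ) :=
  of fun i j => ⟨fun u => (u : Matrix (Fin N) (Fin N) ℂ) i j,
    Continuous.matrix_elem continuous_subtype_val i j⟩

/-- The functional `f ↦ ∫ (det u)⁻ᴹ f(u) du` on polynomials in the entries of a unitary matrix. -/
noncomputable def detMoment (μ : Measure (unitaryGroup (Fin N) ℂ)) [IsFiniteMeasure μ] (M : ℕ) :
    MvPolynomial (Fin N × Fin N) ℂ →ₗ[ℂ] ℂ :=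
  (integralFunctional μ).toLinearMap ∘ₗ
    LinearMap.mulLeft ℂ (star (unitaryCoord N).det ^ M) ∘ₗ (evalMatrix (unitaryCoord N)).toLinearMap

/-- The matrix of coordinate functions of `u ↦ V u` on the unitary group. -/
noncomputable def translatedCoord (V : Matrix (Fin N) (Fin N) ℂ) :
    Matrix (Fin N) (Fin N) C(unitaryGroup (Fin N) ℂ, ℂ) :=
  V.map (algebraMap ℂ C(unitaryGroup (Fin N) ℂ, ℂ)) * unitaryCoord N

theorem translatedCoord_one : translatedCoord (1 : Matrix (Fin N) (Fin N) ℂ) = unitaryCoord N := by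
  simp [translatedCoord]

theorem evalMatrix_translatedCoord_apply (V : Matrix (Fin N) (Fin N) ℂ)
    (f : MvPolynomial (Fin N × Fin N) ℂ) (u : unitaryGroup (Fin N) ℂ) :
    (evalMatrix (translatedCoord V) f : C(unitaryGroup (Fin N) ℂ, ℂ)) u =
      evalMatrix (V * u.1) f := by
  refine (map_evalMatrix (ContinuousMap.evalAlgHom ℂ ℂ u) _ f).trans ?_
  congr 2
  ext i j
  simp [mul_apply, translatedCoord, unitaryCoord]

theorem integralFunctional_star_det_pow_mul (μ : Measure (unitaryGroup (Fin N) ℂ))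
    [IsFiniteMeasure μ] (M : ℕ) (g : C(unitaryGroup (Fin N) ℂ, ℂ)) :
    integralFunctional μ (star (unitaryCoord N).det ^ M * g) =
      ∫ u : unitaryGroup (Fin N) ℂ, star u.1.det ^ M * g u ∂μ := by
  have det_apply (u : unitaryGroup (Fin N) ℂ) : (unitaryCoord N).det u = u.1.det :=
    (ContinuousMap.evalAlgHom ℂ ℂ u).toRingHom.map_det _
  simp [integralFunctional, det_apply]

theorem detMoment_apply (μ : Measure (unitaryGroup (Fin N) ℂ)) [IsFiniteMeasure μ] (M : ℕ)
    (f : MvPolynomial (Fin N × Fin N) ℂ) :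
    detMoment μ M f = ∫ u : unitaryGroup (Fin N) ℂ, star u.1.det ^ M * evalMatrix u.1 f ∂μ := by
  refine (integralFunctional_star_det_pow_mul μ M _).trans ?_
  refine integral_congr_ae (.of_forall fun u => congrArg (star u.1.det ^ M * ·) ?_)
  simpa [translatedCoord_one] using evalMatrix_translatedCoord_apply 1 f u

theorem integral_evalMatrix_unitary_mul (μ : Measure (unitaryGroup (Fin N) ℂ))
    [IsFiniteMeasure μ] [μ.IsMulLeftInvariant] (M : ℕ) {V : Matrix (Fin N) (Fin N) ℂ}
    (hV : V ∈ unitaryGroup (Fin N) ℂ) (f : MvPolynomial (Fin N × Fin N) ℂ) :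
    ∫ u : unitaryGroup (Fin N) ℂ, star u.1.det ^ M * evalMatrix (V * u.1) f ∂μ =
      V.det ^ M * detMoment μ M f := by
  have det_mul_star : V.det * star V.det = 1 :=
    Unitary.mul_star_self_of_mem (det_of_mem_unitary hV)
  rw [detMoment_apply, ← integral_const_mul, ← integral_mul_left_eq_self
    (fun u : unitaryGroup (Fin N) ℂ => V.det ^ M * (star u.1.det ^ M * _)) ⟨V, hV⟩]
  congr! 2 with u
  simp only [Submonoid.coe_mul, det_mul, star_mul', mul_pow, ← mul_assoc]
  rw [← mul_pow, det_mul_star, one_pow, one_mul]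

theorem hasDerivAt_evalMatrix {n A : Type*} [Fintype n] [NormedCommRing A] [NormedAlgebra ℝ A]
    [Algebra ℂ A] {X : Matrix n n ℂ} {c : ℝ → Matrix n n A} {t : ℝ}
    (hc : ∀ i j, HasDerivAt (fun s => c s i j) ((X.map (algebraMap ℂ A) * c t) i j) t)
    (f : MvPolynomial (n × n) ℂ) :
    HasDerivAt (fun s => evalMatrix (c s) f) (evalMatrix (c t) (leftTranslation X f)) t := by
  refine hasDerivAt_aeval (fun p => ?_) f
  convert! hc p.1 p.2 using 1
  simp [mul_apply, mvPolynomialX]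

open scoped Matrix.Norms.L2Operator in
theorem exp_mem_unitaryGroup {X : Matrix (Fin N) (Fin N) ℂ}
    (hX : X ∈ skewAdjoint (Matrix (Fin N) (Fin N) ℂ)) :
    NormedSpace.exp X ∈ unitaryGroup (Fin N) ℂ :=
  let _ : NormedAlgebra ℚ (Matrix (Fin N) (Fin N) ℂ) := .restrictScalars ℚ ℂ _
  NormedSpace.exp_mem_unitary_of_mem_skewAdjoint hX

open scoped Matrix.Norms.L2Operator in
theorem hasDerivAt_exp_smul_apply (X : Matrix (Fin N) (Fin N) ℂ) (i j : Fin N) :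
    HasDerivAt (fun t : ℝ => NormedSpace.exp (t • X) i j) (X i j) 0 := by
  have := (entryLinearMap ℝ ℂ i j).toContinuousLinearMap.hasFDerivAt.comp_hasDerivAt (0 : ℝ)
    (hasDerivAt_exp_smul_const (𝕂 := ℝ) X 0)
  simpa using! this

theorem detMoment_leftTranslation_of_mem_skewAdjoint (μ : Measure (unitaryGroup (Fin N) ℂ))
    [IsFiniteMeasure μ] [μ.IsMulLeftInvariant] (M : ℕ) {X : Matrix (Fin N) (Fin N) ℂ}
    (hX : X ∈ skewAdjoint (Matrix (Fin N) (Fin N) ℂ)) (f : MvPolynomial (Fin N × Fin N) ℂ) :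
    detMoment μ M (leftTranslation X f) = M * X.trace * detMoment μ M f := by
  let γ (t : ℝ) : Matrix (Fin N) (Fin N) ℂ := NormedSpace.exp (t • X)
  let weight : C(unitaryGroup (Fin N) ℂ, ℂ) := star (unitaryCoord N).det ^ M
  have γ_zero : γ 0 = 1 := by simp [γ]
  have deriv_γ (i j : Fin N) : HasDerivAt (fun t => γ t i j) ((X * γ 0) i j) 0 := by
    simpa [γ_zero] using hasDerivAt_exp_smul_apply X i j
  have deriv_coord (i j : Fin N) :
      HasDerivAt (fun t => translatedCoord (γ t) i j) ((X.map (algebraMap ℂ _) *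
        translatedCoord (γ 0) : Matrix (Fin N) (Fin N) C(unitaryGroup (Fin N) ℂ, ℂ)) i j) 0 := by
    have := HasDerivAt.fun_sum fun k (_ : k ∈ Finset.univ) =>
      ((Algebra.linearMap ℂ C(unitaryGroup (Fin N) ℂ, ℂ)).toContinuousLinearMap.restrictScalars
        ℝ |>.hasFDerivAt.comp_hasDerivAt (0 : ℝ) (deriv_γ i k)).mul_const (unitaryCoord N k j)
    simpa [translatedCoord, mul_apply, γ_zero, one_apply] using! this
  have deriv_moment : HasDerivAt
      (fun t => integralFunctional μ (weight * evalMatrix (translatedCoord (γ t)) f))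
      (detMoment μ M (leftTranslation X f)) 0 := by
    have := (integralFunctional μ).restrictScalars ℝ |>.hasFDerivAt.comp_hasDerivAt (0 : ℝ)
      ((hasDerivAt_evalMatrix deriv_coord f).const_mul weight)
    rw [γ_zero, translatedCoord_one] at this
    exact this
  have deriv_det : HasDerivAt (fun t => (γ t).det ^ M) (M * X.trace) 0 := by
    have := hasDerivAt_evalMatrix deriv_γ ((mvPolynomialX (Fin N) (Fin N) ℂ).det ^ M)
    simpa [evalMatrix_det, γ_zero, Derivation.leibniz_pow, leftTranslation_det, mul_comm]
      using! this
  refine deriv_moment.unique ((deriv_det.mul_const (detMoment μ M f)).congr_of_eventuallyEq <|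
    .of_forall fun t => ?_)
  refine (integralFunctional_star_det_pow_mul μ M _).trans ?_
  simp_rw [evalMatrix_translatedCoord_apply]
  exact integral_evalMatrix_unitary_mul μ M (exp_mem_unitaryGroup (skewAdjoint.smul_mem t hX)) f

theorem detMoment_leftTranslation (μ : Measure (unitaryGroup (Fin N) ℂ))
    [IsFiniteMeasure μ] [μ.IsMulLeftInvariant] (M : ℕ) (X : Matrix (Fin N) (Fin N) ℂ)
    (f : MvPolynomial (Fin N × Fin N) ℂ) :
    detMoment μ M (leftTranslation X f) = M * X.trace * detMoment μ M f := by
  have of_selfAdjoint (Y : selfAdjoint (Matrix (Fin N) (Fin N) ℂ)) :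
      detMoment μ M (leftTranslation Y.1 f) = M * Y.1.trace * detMoment μ M f := by
    have := detMoment_leftTranslation_of_mem_skewAdjoint μ M
      (Y.2.smul_mem_skewAdjoint Complex.conj_I) f
    rw [leftTranslation_smul, Derivation.smul_apply, map_smul, trace_smul, smul_eq_mul,
      smul_eq_mul] at this
    exact mul_left_cancel₀ Complex.I_ne_zero (by linear_combination this)
  rw [← realPart_add_I_smul_imaginaryPart X, leftTranslation_add, leftTranslation_smul, trace_add,
    trace_smul, Derivation.add_apply, Derivation.smul_apply, map_add, map_smul, of_selfAdjoint,
    of_selfAdjoint, smul_eq_mul, smul_eq_mul]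
  ring

end Invariance

section RowDet

variable {ι R : Type*} [Fintype ι] [DecidableEq ι] [CommRing R]

/-- The matrix whose `r`-th row is the `r`-th row of `G ^ ν r`, where `G` is the generic matrix. -/
noncomputable def rowMatrix (R : Type*) [CommRing R] (ν : ι → ℕ) :
    Matrix ι ι (MvPolynomial (ι × ι) R) :=
  of fun r => (mvPolynomialX ι ι R ^ ν r).row r

/-- The determinant of `rowMatrix R ν`. By multilinearity every `det P(G)` is a linear combination
of these. -/
noncomputable def rowDet (R : Type*) [CommRing R] (ν : ι → ℕ) : MvPolynomial (ι × ι) R :=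
  (rowMatrix R ν).det

theorem rowMatrix_update (ν : ι → ℕ) (r : ι) (a : ℕ) :
    rowMatrix R (Function.update ν r a) =
      (rowMatrix R ν).updateRow r ((mvPolynomialX ι ι R ^ a).row r) := by
  ext1 s c
  obtain rfl | hs := eq_or_ne s r <;> simp [rowMatrix, *]

theorem leftTranslation_pow (X : Matrix ι ι R) (b : ℕ) :
    (mvPolynomialX ι ι R ^ b).map (leftTranslation X) = ∑ k ∈ Finset.range b,
      mvPolynomialX ι ι R ^ k * X.map MvPolynomial.C * mvPolynomialX ι ι R ^ (b - k) := by
  have leibniz (A B : Matrix ι ι (MvPolynomial (ι × ι) R)) : (A * B).map (leftTranslation X) =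
      A.map (leftTranslation X) * B + A * B.map (leftTranslation X) := by
    ext1 i j
    simp [mul_apply, Derivation.leibniz, Finset.sum_add_distrib, mul_comm, add_comm]
  induction b with
  | zero => ext1 i j; simp [one_apply, apply_ite (leftTranslation X)]
  | succ b ih =>
    rw [pow_succ, leibniz, ih, leftTranslation_mvPolynomialX, Finset.sum_range_succ,
      Finset.sum_mul]
    refine congrArg₂ (· + ·) (Finset.sum_congr rfl fun k hk => ?_) ?_
    · rw [Nat.succ_sub (Finset.mem_range.mp hk).le, pow_succ, Matrix.mul_assoc _ (_ ^ _)]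
    · rw [Nat.add_sub_cancel_left, pow_one, Matrix.mul_assoc]

theorem leftTranslation_single_pow_apply (i r s c : ι) (b : ℕ) :
    leftTranslation (single i r (1 : R)) ((mvPolynomialX ι ι R ^ b) s c) =
      ∑ k ∈ Finset.range b,
        (mvPolynomialX ι ι R ^ k) s i * (mvPolynomialX ι ι R ^ (b - k)) r c := by
  refine (congrFun₂ (leftTranslation_pow (single i r 1) b) s c).trans ?_
  rw [Matrix.sum_apply]
  refine Finset.sum_congr rfl fun k _ => ?_
  simp [mul_apply, single_apply, ite_and, Finset.sum_ite_eq]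

theorem trace_pow_mul_rowDet (ν : ι → ℕ) (k : ℕ) :
    (mvPolynomialX ι ι R ^ k).trace * rowDet R ν =
      ∑ j, rowDet R (Function.update ν j (ν j + k)) := by
  rw [rowDet, ← sum_det_updateRow_vecMul]
  refine Finset.sum_congr rfl fun j _ => ?_
  rw [rowDet, rowMatrix_update, pow_add]
  rfl

theorem det_updateRow_sum_smul {κ A : Type*} [CommRing A] (B : Matrix ι ι A) (r : ι)
    (s : Finset κ) (c : κ → A) (v : κ → ι → A) :
    (B.updateRow r fun j => ∑ k ∈ s, c k * v k j).det =
      ∑ k ∈ s, c k * (B.updateRow r (v k)).det := by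
  have sum_eq : (fun j => ∑ k ∈ s, c k * v k j) = ∑ k ∈ s, c k • v k := by
    ext1 j; simp
  rw [sum_eq]
  refine (detRowAlternating.toMultilinearMap.map_update_sum s r (fun k => c k • v k) B).trans ?_
  exact Finset.sum_congr rfl fun k _ => det_updateRow_smul B r (c k) (v k)

theorem sum_leftTranslation_det_updateRow_self (ν : ι → ℕ) (r : ι) :
    ∑ i, ((rowMatrix R ν).updateRow r fun c =>
        leftTranslation (single i r 1) ((mvPolynomialX ι ι R ^ ν r) i c)).det =
      ∑ k ∈ Finset.range (ν r), ∑ j, rowDet R (Function.update (Function.update ν r (ν r - k)) j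
        (Function.update ν r (ν r - k) j + k)) := by
  simp_rw [leftTranslation_single_pow_apply, det_updateRow_sum_smul, ← trace_pow_mul_rowDet]
  rw [Finset.sum_comm]
  refine Finset.sum_congr rfl fun k _ => ?_
  rw [rowDet, rowMatrix_update, trace, Finset.sum_mul]
  rfl

theorem rowDet_update_update_swap (ν : ι → ℕ) {r j : ι} (hj : j ≠ r) (a b : ℕ) :
    (((rowMatrix R ν).updateRow j ((mvPolynomialX ι ι R ^ b).row r)).updateRow r
      ((mvPolynomialX ι ι R ^ a).row j)).det =
        -rowDet R (Function.update (Function.update ν r b) j a) := by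
  have det_swap (B : Matrix ι ι (MvPolynomial (ι × ι) R)) :
      (B.submatrix (Equiv.swap j r) id).det = -B.det := by
    simp [det_permute, Equiv.Perm.sign_swap hj]
  rw [rowDet, rowMatrix_update, rowMatrix_update, ← det_swap]
  congr 1
  ext1 s c
  obtain rfl | hs := eq_or_ne s r
  · simp
  obtain rfl | hs' := eq_or_ne s j
  · simp [hj, updateRow_ne hj.symm]
  · simp [hs, hs', Equiv.swap_apply_of_ne_of_ne hs' hs]

theorem sum_leftTranslation_det_updateRow_of_ne (ν : ι → ℕ) {r j : ι} (hj : j ≠ r) :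
    ∑ i, (((rowMatrix R ν).updateRow r ((mvPolynomialX ι ι R ^ ν r).row i)).updateRow j fun c =>
        leftTranslation (single i r 1) (rowMatrix R ν j c)).det =
      -∑ k ∈ Finset.range (ν j),
        rowDet R (Function.update (Function.update ν r (ν j - k)) j (ν r + k)) := by
  have expand (i : ι) : (fun c => leftTranslation (single i r 1) (rowMatrix R ν j c)) =
      fun c => ∑ k ∈ Finset.range (ν j), (mvPolynomialX ι ι R ^ k) j i *
        (mvPolynomialX ι ι R ^ (ν j - k)).row r c :=
    funext fun c => leftTranslation_single_pow_apply i r j c (ν j)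
  have pow_row (k : ℕ) : (fun c => ∑ i, (mvPolynomialX ι ι R ^ k) j i *
      (mvPolynomialX ι ι R ^ ν r).row i c) = (mvPolynomialX ι ι R ^ (ν r + k)).row j := by
    rw [add_comm, pow_add]
    rfl
  simp_rw [expand, det_updateRow_sum_smul]
  rw [Finset.sum_comm, ← Finset.sum_neg_distrib]
  refine Finset.sum_congr rfl fun k _ => ?_
  simp_rw [updateRow_comm _ hj.symm, ← det_updateRow_sum_smul, pow_row]
  exact rowDet_update_update_swap ν hj _ _

theorem sum_leftTranslation_det_updateRow (ν : ι → ℕ) (r : ι) :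
    ∑ i, leftTranslation (single i r 1)
        ((rowMatrix R ν).updateRow r ((mvPolynomialX ι ι R ^ ν r).row i)).det =
      ν r • rowDet R ν + ∑ j ∈ Finset.univ.erase r,
        (∑ k ∈ Finset.range (ν r),
            rowDet R (Function.update (Function.update ν r (ν r - k)) j (ν j + k)) -
          ∑ k ∈ Finset.range (ν j),
            rowDet R (Function.update (Function.update ν r (ν j - k)) j (ν r + k))) := by
  have self : ∑ i, ((rowMatrix R ν).updateRow r fun c =>
      leftTranslation (single i r 1) ((mvPolynomialX ι ι R ^ ν r) i c)).det =
        ν r • rowDet R ν + ∑ j ∈ Finset.univ.erase r, ∑ k ∈ Finset.range (ν r),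
          rowDet R (Function.update (Function.update ν r (ν r - k)) j (ν j + k)) := by
    rw [sum_leftTranslation_det_updateRow_self, Finset.sum_comm,
      ← Finset.add_sum_erase _ _ (Finset.mem_univ r)]
    refine congrArg₂ (· + ·) ?_ (Finset.sum_congr rfl fun j hj => ?_)
    · rw [Finset.sum_congr rfl fun k hk => show _ = rowDet R ν by
        simp [Nat.sub_add_cancel (Finset.mem_range.mp hk).le]]
      simp
    · simp [Finset.ne_of_mem_erase hj]
  simp_rw [derivation_det]
  rw [Finset.sum_comm, ← Finset.add_sum_erase _ _ (Finset.mem_univ r), Finset.sum_sub_distrib,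
    ← add_sub_assoc, ← self, sub_eq_add_neg, ← Finset.sum_neg_distrib]
  refine congrArg₂ (· + ·) ?_ (Finset.sum_congr rfl fun j hj => ?_)
  · simp [updateRow_idem]
  · rw [← sum_leftTranslation_det_updateRow_of_ne ν (Finset.ne_of_mem_erase hj)]
    simp [updateRow_ne (Finset.ne_of_mem_erase hj)]

theorem leftTranslation_one_rowDet (ν : ι → ℕ) :
    leftTranslation (1 : Matrix ι ι R) (rowDet R ν) = (∑ i, ν i : ℕ) • rowDet R ν := by
  have row (i : ι) : (fun c => leftTranslation (1 : Matrix ι ι R) (rowMatrix R ν i c)) =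
      (ν i : MvPolynomial (ι × ι) R) • rowMatrix R ν i := by
    have term (k : ℕ) (hk : k ∈ Finset.range (ν i)) : mvPolynomialX ι ι R ^ k *
        (1 : Matrix ι ι R).map MvPolynomial.C * mvPolynomialX ι ι R ^ (ν i - k) =
          mvPolynomialX ι ι R ^ ν i := by
      rw [Matrix.map_one _ (map_zero _) (map_one _), Matrix.mul_one, ← pow_add,
        Nat.add_sub_cancel' (Finset.mem_range.mp hk).le]
    ext1 c
    refine (congrFun₂ (leftTranslation_pow 1 (ν i)) i c).trans ?_
    rw [Finset.sum_congr rfl term, Finset.sum_const, Finset.card_range, Matrix.smul_apply,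
      nsmul_eq_mul]
    rfl
  simp_rw [rowDet, derivation_det, row, det_updateRow_smul, updateRow_eq_self, ← Finset.sum_mul,
    ← Nat.cast_sum, nsmul_eq_mul]

end RowDet

section LoopEquation

variable {ι K : Type*} [Fintype ι]

theorem exists_forall_le_and_lt_of_sum_eq {M : ℕ} {ν : ι → ℕ}
    (hsum : ∑ i, ν i = Fintype.card ι * M) (hν : ν ≠ fun _ => M) :
    ∃ r, (∀ j, ν j ≤ ν r) ∧ M < ν r := by
  obtain ⟨i, hi⟩ := Function.ne_iff.mp hν
  obtain ⟨r, -, hr⟩ := Finset.exists_max_image Finset.univ ν ⟨i, Finset.mem_univ i⟩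
  refine ⟨r, fun j => hr j (Finset.mem_univ j), ?_⟩
  by_contra! hrM
  have hle (j : ι) (_ : j ∈ Finset.univ) : ν j ≤ M := (hr j (Finset.mem_univ j)).trans hrM
  exact hi ((Finset.sum_eq_sum_iff_of_le hle).mp (by simp [hsum]) i (Finset.mem_univ i))

variable [DecidableEq ι]

theorem sum_range_sub_sum_range {A : Type*} [AddCommGroup A] (F : ℕ → ℕ → A) {a b : ℕ}
    (hab : b ≤ a) :
    ∑ k ∈ Finset.range a, F (a - k) (b + k) - ∑ k ∈ Finset.range b, F (b - k) (a + k) =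
      ∑ k ∈ Finset.range (a - b), F (a - k) (b + k) := by
  obtain ⟨d, rfl⟩ := Nat.exists_eq_add_of_le' hab
  rw [Finset.sum_range_add, Nat.add_sub_cancel, add_sub_assoc, ← Finset.sum_sub_distrib,
    add_eq_left]
  refine Finset.sum_eq_zero fun k _ => ?_
  rw [Nat.add_sub_add_left, ← add_assoc, ← add_comm d, sub_self]

theorem sum_sq_update_update_lt (ν : ι → ℕ) {r j : ι} (hj : j ≠ r) {k : ℕ} (hk : 0 < k)
    (hkr : k < ν r - ν j) :
    ∑ i, Function.update (Function.update ν r (ν r - k)) j (ν j + k) i ^ 2 < ∑ i, ν i ^ 2 := by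
  have split (f : ι → ℕ) :
      ∑ i, f i ^ 2 = f j ^ 2 + (f r ^ 2 + ∑ i ∈ (Finset.univ.erase j).erase r, f i ^ 2) := by
    rw [Finset.add_sum_erase _ (f · ^ 2) (Finset.mem_erase.mpr ⟨hj.symm, Finset.mem_univ r⟩),
      Finset.add_sum_erase _ (f · ^ 2) (Finset.mem_univ j)]
  have rest : ∑ i ∈ (Finset.univ.erase j).erase r,
      Function.update (Function.update ν r (ν r - k)) j (ν j + k) i ^ 2 =
        ∑ i ∈ (Finset.univ.erase j).erase r, ν i ^ 2 :=
    Finset.sum_congr rfl fun i hi => by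
      obtain ⟨hir, hij⟩ := by simpa using hi
      simp [hir, hij]
  rw [split, split ν, rest]
  obtain ⟨d, hd⟩ := Nat.exists_eq_add_of_lt hkr
  have hr : ν r = ν j + k + d + 1 := by omega
  simp only [Function.update_self, Function.update_of_ne hj.symm]
  rw [hr, show ν j + k + d + 1 - k = ν j + d + 1 by omega]
  nlinarith

variable [CommRing K]

variable (ι K) in
/-- The functions `h` on `ι → ℕ` supported on `∑ i, ν i = card ι * M` that satisfy the loop
(Schwinger-Dyson) equations of the average of `ν ↦ (det u)⁻ᴹ rowDet ν (u)` over the unitary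
group. -/
def loopSolutions (M : ℕ) : Submodule K ((ι → ℕ) → K) where
  carrier := {h | (∀ ν, ∑ i, ν i ≠ Fintype.card ι * M → h ν = 0) ∧ ∀ ν r,
    (ν r - M : K) * h ν + ∑ j ∈ Finset.univ.erase r,
      (∑ k ∈ Finset.range (ν r),
          h (Function.update (Function.update ν r (ν r - k)) j (ν j + k)) -
        ∑ k ∈ Finset.range (ν j),
          h (Function.update (Function.update ν r (ν j - k)) j (ν r + k))) = 0}
  zero_mem' := by simp
  add_mem' {h₁ h₂} hh₁ hh₂ := by
    refine ⟨fun ν hν => by simp [hh₁.1 ν hν, hh₂.1 ν hν], fun ν r => ?_⟩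
    have := congrArg₂ (· + ·) (hh₁.2 ν r) (hh₂.2 ν r)
    simp only [Finset.sum_sub_distrib] at this
    simp only [Pi.add_apply, Finset.sum_add_distrib, Finset.sum_sub_distrib]
    linear_combination this
  smul_mem' c h hh := by
    refine ⟨fun ν hν => by simp [hh.1 ν hν], fun ν r => ?_⟩
    have := congrArg (c * ·) (hh.2 ν r)
    simp only [Finset.sum_sub_distrib] at this
    simp only [Pi.smul_apply, smul_eq_mul, ← Finset.mul_sum, Finset.sum_sub_distrib]
    linear_combination this

/-- At an index `r` where `ν` is maximal, all terms of the loop equation other than `h ν` have a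
smaller sum of squares. -/
theorem eq_zero_of_mem_loopSolutions [IsDomain K] [CharZero K] {M : ℕ} {h : (ι → ℕ) → K}
    (hh : h ∈ loopSolutions ι K M) (hconst : h (fun _ => M) = 0) : h = 0 := by
  suffices ∀ n ν, ∑ i, ν i ^ 2 = n → h ν = 0 from funext fun ν => this _ ν rfl
  intro n
  induction n using Nat.strong_induction_on with
  | _ n ih =>
  rintro ν rfl
  by_cases hsum : ∑ i, ν i = Fintype.card ι * M
  swap; · exact hh.1 ν hsum
  obtain rfl | hν := eq_or_ne ν fun _ => M
  · exact hconst
  obtain ⟨r, hr, hrM⟩ := exists_forall_le_and_lt_of_sum_eq hsum hν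
  have loop := hh.2 ν r
  have bracket (j : ι) (hj : j ∈ Finset.univ.erase r) : (∑ k ∈ Finset.range (ν r),
          h (Function.update (Function.update ν r (ν r - k)) j (ν j + k)) -
        ∑ k ∈ Finset.range (ν j),
          h (Function.update (Function.update ν r (ν j - k)) j (ν r + k))) =
      ((if ν j < ν r then 1 else 0 : ℕ) : K) * h ν := by
    rw [sum_range_sub_sum_range
      (fun a b => h (Function.update (Function.update ν r a) j b)) (hr j)]
    obtain hjr | hjr := (hr j).eq_or_lt
    · simp [hjr]
    obtain ⟨d, hd⟩ := Nat.exists_eq_succ_of_ne_zero (Nat.sub_ne_zero_of_lt hjr)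
    rw [hd, Finset.sum_range_succ', Finset.sum_eq_zero fun k hk => ?_]
    · simp [hjr]
    · have := Finset.mem_range.mp hk
      exact ih _ (sum_sq_update_update_lt ν (Finset.ne_of_mem_erase hj) k.succ_pos
        (by omega)) _ rfl
  rw [Finset.sum_congr rfl bracket, ← Finset.sum_mul, ← add_mul, ← Nat.cast_sum,
    ← Nat.cast_sub hrM.le, ← Nat.cast_add] at loop
  exact (mul_eq_zero.mp loop).resolve_left (Nat.cast_ne_zero.mpr (by omega))

end LoopEquation

section DetMomentRowDet

variable {N : ℕ}

theorem detMoment_rowDet_mem_loopSolutions (μ : Measure (unitaryGroup (Fin N) ℂ))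
    [IsFiniteMeasure μ] [μ.IsMulLeftInvariant] (M : ℕ) :
    (fun ν => detMoment μ M (rowDet ℂ ν)) ∈ loopSolutions (Fin N) ℂ M := by
  refine ⟨fun ν hν => ?_, fun ν r => ?_⟩
  · have euler := detMoment_leftTranslation μ M 1 (rowDet ℂ ν)
    rw [leftTranslation_one_rowDet, map_nsmul, trace_one, nsmul_eq_mul, ← sub_eq_zero,
      ← sub_mul, mul_comm (M : ℂ), ← Nat.cast_mul, sub_mul, sub_eq_zero] at euler
    by_contra h
    exact hν (Nat.cast_injective (mul_right_cancel₀ h euler))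
  · have loop := congrArg (detMoment μ M) (sum_leftTranslation_det_updateRow ν r)
    simp only [map_sum, detMoment_leftTranslation, map_add, map_nsmul, map_sub] at loop
    rw [Finset.sum_eq_single_of_mem r (Finset.mem_univ r) fun i _ hi => by simp [hi],
      trace_single_eq_same, ← rowMatrix_update, Function.update_eq_self, ← rowDet,
      nsmul_eq_mul] at loop
    dsimp only
    linear_combination -loop

theorem rowDet_const {ι R : Type*} [Fintype ι] [DecidableEq ι] [CommRing R] (M : ℕ) :
    rowDet R (fun _ : ι => M) = (mvPolynomialX ι ι R).det ^ M :=
  det_pow _ _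

theorem star_det_mul_det (u : unitaryGroup (Fin N) ℂ) : star u.1.det * u.1.det = 1 :=
  Unitary.star_mul_self_of_mem (det_of_mem_unitary u.2)

theorem detMoment_rowDet_const (μ : Measure (unitaryGroup (Fin N) ℂ)) [IsProbabilityMeasure μ]
    (M : ℕ) : detMoment μ M (rowDet ℂ fun _ => M) = 1 := by
  simp_rw [detMoment_apply, rowDet_const, map_pow, evalMatrix_det, ← mul_pow, star_det_mul_det,
    one_pow]
  simp

theorem det_aeval_mvPolynomialX {ι R : Type*} [Fintype ι] [DecidableEq ι] [CommRing R]
    (P : Polynomial R) : (Polynomial.aeval (mvPolynomialX ι ι R) P).det =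
      ∑ ν ∈ Fintype.piFinset fun _ => Finset.range (P.natDegree + 1),
        (∏ i, P.coeff (ν i)) • rowDet R ν := by
  have row (i : ι) : Polynomial.aeval (mvPolynomialX ι ι R) P i =
      ∑ k ∈ Finset.range (P.natDegree + 1),
        (MvPolynomial.C (P.coeff k) : MvPolynomial (ι × ι) R) •
          (mvPolynomialX ι ι R ^ k) i := by
    ext1 c
    simp [Polynomial.aeval_eq_sum_range, Matrix.sum_apply, MvPolynomial.smul_eq_C_mul]
  have expand := (detRowAlternating (R := MvPolynomial (ι × ι) R)).toMultilinearMap.map_sum_finset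
    (fun i k => (MvPolynomial.C (P.coeff k) : MvPolynomial (ι × ι) R) •
          (mvPolynomialX ι ι R ^ k) i) fun _ => Finset.range (P.natDegree + 1)
  refine (congrArg det (funext row)).trans (expand.trans (Finset.sum_congr rfl fun ν _ => ?_))
  rw [MultilinearMap.map_smul_univ, MvPolynomial.smul_eq_C_mul, map_prod]
  rfl

end DetMomentRowDet

section VandermondeSq

open MvPolynomial

theorem sum_sub_sum_eq_neg_add {A : Type*} [AddCommGroup A] {x y : ℕ → ℕ → A}
    (shift : ∀ a b, x (a + 1) b = y a (b + 1)) (antisymm : ∀ a b, x b a = -y a b) (a b : ℕ) :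
    ∑ k ∈ Finset.range a, (x (a - k) (b + k) - y (a - k) (b + k)) -
        ∑ k ∈ Finset.range b, (x (b - k) (a + k) - y (b - k) (a + k)) = -(x a b + y a b) := by
  have telescope (a b : ℕ) : ∑ k ∈ Finset.range a, (x (a - k) (b + k) - y (a - k) (b + k)) =
      y 0 (b + a) - y a b := by
    rw [Finset.sum_congr rfl fun k hk => ?_, Finset.sum_range_sub fun k => y (a - k) (b + k)]
    · simp
    · have := Finset.mem_range.mp hk
      rw [show a - k = a - (k + 1) + 1 by omega, shift, add_assoc]
  rw [telescope, telescope, add_comm a b, antisymm b a]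
  abel

variable {ι R : Type*} [CommRing R]

theorem coeff_X_mul_pderiv (r : ι) (m : ι →₀ ℕ) (f : MvPolynomial ι R) :
    coeff m (X r * pderiv r f) = m r * coeff m f := by
  classical
  rw [coeff_X_mul', coeff_pderiv]
  split_ifs with hr
  · have hmr := Nat.one_le_iff_ne_zero.mpr (Finsupp.mem_support_iff.mp hr)
    rw [tsub_add_cancel_of_le (Finsupp.single_le_iff.mpr hmr), mul_comm]
    simp [Nat.cast_sub hmr]
  · simp [Finsupp.notMem_support_iff.mp hr]

variable [DecidableEq ι] [Fintype ι]

variable (ι R) in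
/-- The product of `X i - X j` over all ordered pairs `i ≠ j`, a square of the Vandermonde
determinant up to sign. On the torus and up to a monomial it is the Weyl density of the unitary
group. -/
noncomputable def vandermondeSq : MvPolynomial ι R :=
  ∏ p ∈ (Finset.univ : Finset ι).offDiag, (X p.1 - X p.2)

variable (R) in
/-- The cofactor of `X r - X j` in `vandermondeSq ι R`. -/
noncomputable def vandermondeSqCofactor (r j : ι) : MvPolynomial ι R :=
  ∏ p ∈ (Finset.univ : Finset ι).offDiag.erase (r, j), (X p.1 - X p.2)

theorem sub_mul_vandermondeSqCofactor {r j : ι} (hj : j ≠ r) :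
    (X r - X j) * vandermondeSqCofactor R r j = vandermondeSq ι R := by
  rw [vandermondeSqCofactor, vandermondeSq, ← Finset.mul_prod_erase Finset.univ.offDiag
    (fun p : ι × ι => (X p.1 - X p.2 : MvPolynomial ι R)) (show (r, j) ∈ _ by simp [hj.symm])]

theorem vandermondeSqCofactor_swap {r j : ι} (hj : j ≠ r) :
    vandermondeSqCofactor R j r = -vandermondeSqCofactor R r j := by
  have split {r j : ι} (hj : j ≠ r) : vandermondeSqCofactor R r j = (X j - X r) *
      ∏ p ∈ ((Finset.univ : Finset ι).offDiag.erase (r, j)).erase (j, r), (X p.1 - X p.2) := by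
    rw [vandermondeSqCofactor, ← Finset.mul_prod_erase _
      (fun p : ι × ι => (X p.1 - X p.2 : MvPolynomial ι R)) (show (j, r) ∈ _ by simp [hj])]
  rw [split hj, split hj.symm, Finset.erase_right_comm, ← neg_mul, neg_sub]

theorem rename_swap_vandermondeSqCofactor (r j : ι) :
    rename (Equiv.swap r j) (vandermondeSqCofactor R r j) = vandermondeSqCofactor R j r := by
  rw [vandermondeSqCofactor, map_prod]
  refine Finset.prod_equiv ((Equiv.swap r j).prodCongr (Equiv.swap r j)) (fun p => ?_)
    fun p _ => by simp
  simp [Prod.ext_iff, Equiv.swap_apply_eq_iff]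

theorem pderiv_vandermondeSq (r : ι) :
    pderiv r (vandermondeSq ι R) =
      2 * ∑ j ∈ Finset.univ.erase r, vandermondeSqCofactor R r j := by
  have factor (p : ι × ι) : pderiv r (X p.1 - X p.2 : MvPolynomial ι R) =
      (if p.1 = r then 1 else 0) - if p.2 = r then 1 else 0 := by
    rw [map_sub, pderiv_X, pderiv_X, Pi.single_apply, Pi.single_apply]
  rw [vandermondeSq, derivation_prod]
  simp_rw [factor, mul_sub, Finset.sum_sub_distrib, mul_ite, mul_one, mul_zero]
  rw [Finset.sum_finset_product _ Finset.univ (fun i => Finset.univ.erase i) (by simp [ne_comm]),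
    Finset.sum_finset_product_right _ Finset.univ (fun j => Finset.univ.erase j) (by simp),
    two_mul, sub_eq_add_neg]
  refine congrArg₂ (· + ·) ?_ ?_
  · rw [Finset.sum_eq_single_of_mem r (Finset.mem_univ r) fun i _ hi => by simp [hi]]
    simp [vandermondeSqCofactor]
  · rw [Finset.sum_eq_single_of_mem r (Finset.mem_univ r) fun i _ hi => by simp [hi],
      ← Finset.sum_neg_distrib]
    refine Finset.sum_congr rfl fun j hj => ?_
    rw [if_pos rfl]
    exact (vandermondeSqCofactor_swap (Finset.ne_of_mem_erase hj).symm).symm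

end VandermondeSq

section TorusMoment

open MvPolynomial

variable {ι R : Type*} [Fintype ι] [CommRing R]

/-- The exponent `ν` shifted by the degree `card ι - 1` of `vandermondeSq` in each variable and its
inverse, so that `ν = M` is the central coefficient of `(∏ i, X i) ^ M * vandermondeSq`. -/
noncomputable def shiftedExponent (ν : ι → ℕ) : ι →₀ ℕ :=
  Finsupp.equivFunOnFinite.symm fun i => ν i + (Fintype.card ι - 1)

variable (R) in
/-- The analogue of the moment of `ν ↦ (det u)⁻ᴹ rowDet ν (u)` on the torus with the Weyl density:
`rowDet ν` is replaced by the monomial `∏ i, X i ^ ν i`. -/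
noncomputable def torusMoment (M : ℕ) (ν : ι → ℕ) : R :=
  coeff (shiftedExponent ν) ((∏ i, X i) ^ M * vandermondeSq ι R)

theorem torusMoment_eq_zero {M : ℕ} {ν : ι → ℕ} (hν : ∑ i, ν i ≠ Fintype.card ι * M) :
    torusMoment R M ν = 0 := by
  have homogeneous : ((∏ i, X i) ^ M * vandermondeSq ι R).IsHomogeneous
      ((∑ _i : ι, 1) * M + ∑ _p ∈ (Finset.univ : Finset ι).offDiag, 1) :=
    ((IsHomogeneous.prod _ _ _ fun i _ => isHomogeneous_X R i).pow M).mul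
      (IsHomogeneous.prod _ _ _ fun p _ => (isHomogeneous_X R p.1).sub (isHomogeneous_X R p.2))
  refine homogeneous.coeff_eq_zero fun h => hν ?_
  simpa [shiftedExponent, Finsupp.degree_eq_sum, Finset.sum_add_distrib, Finset.offDiag_card,
    Nat.mul_sub_one] using h

theorem X_mul_pderiv_prod_X_pow (r : ι) (M : ℕ) :
    X r * pderiv r ((∏ i, X i : MvPolynomial ι R) ^ M) =
      (M : MvPolynomial ι R) * (∏ i, X i) ^ M := by
  classical
  have euler : X r * pderiv r (∏ i, X i : MvPolynomial ι R) = ∏ i, X i := by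
    rw [derivation_prod, Finset.sum_eq_single_of_mem r (Finset.mem_univ r)
      fun i _ hi => by simp [pderiv_X_of_ne hi], pderiv_X_self, mul_one,
      Finset.mul_prod_erase _ _ (Finset.mem_univ r)]
  obtain _ | M := M
  · simp
  · rw [Derivation.leibniz_pow, Nat.add_sub_cancel, pow_succ, smul_eq_mul, nsmul_eq_mul]
    linear_combination (↑(M + 1) * (∏ i, X i) ^ M) * euler

variable [DecidableEq ι]

theorem shiftedExponent_update_succ (ν : ι → ℕ) (r : ι) (a : ℕ) :
    shiftedExponent (Function.update ν r (a + 1)) =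
      Finsupp.single r 1 + shiftedExponent (Function.update ν r a) := by
  ext i
  obtain rfl | hi := eq_or_ne i r
  · simp [shiftedExponent, add_assoc, add_comm 1]
  · simp [shiftedExponent, hi]

theorem mapDomain_swap_shiftedExponent (ν : ι → ℕ) {r j : ι} (hj : j ≠ r) (a b : ℕ) :
    (shiftedExponent (Function.update (Function.update ν r a) j b)).mapDomain (Equiv.swap r j) =
      shiftedExponent (Function.update (Function.update ν r b) j a) := by
  ext i
  rw [Finsupp.mapDomain_equiv_apply, Equiv.symm_swap]
  obtain rfl | hir := eq_or_ne i r
  · simp [shiftedExponent, hj.symm]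
  obtain rfl | hij := eq_or_ne i j
  · simp [shiftedExponent, hj.symm]
  · simp [shiftedExponent, hir, hij, Equiv.swap_apply_of_ne_of_ne hir hij]

theorem sum_torusMoment_sub_sum_torusMoment (M : ℕ) (ν : ι → ℕ) {r j : ι} (hj : j ≠ r) :
    ∑ k ∈ Finset.range (ν r),
        torusMoment R M (Function.update (Function.update ν r (ν r - k)) j (ν j + k)) -
      ∑ k ∈ Finset.range (ν j),
        torusMoment R M (Function.update (Function.update ν r (ν j - k)) j (ν r + k)) =
      -coeff (shiftedExponent ν)
        ((X r + X j) * ((∏ i, X i) ^ M * vandermondeSqCofactor R r j)) := by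
  set K : MvPolynomial ι R := (∏ i, X i) ^ M * vandermondeSqCofactor R r j
  have rename_K : rename (Equiv.swap r j) K = -K := by
    rw [map_mul, map_pow, map_prod, rename_swap_vandermondeSqCofactor,
      vandermondeSqCofactor_swap hj, mul_neg]
    simp_rw [rename_X]
    rw [Equiv.prod_comp (Equiv.swap r j) fun i => (X i : MvPolynomial ι R)]
  let e (a b : ℕ) := shiftedExponent (Function.update (Function.update ν r a) j b)
  have torusMoment_eq (a b : ℕ) :
      torusMoment R M (Function.update (Function.update ν r a) j b) =
        coeff (e a b) (X r * K) - coeff (e a b) (X j * K) := by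
    rw [torusMoment, ← sub_mul_vandermondeSqCofactor hj, ← coeff_sub]
    congr 1
    ring
  have shift (a b : ℕ) : coeff (e (a + 1) b) (X r * K) = coeff (e a (b + 1)) (X j * K) := by
    simp only [e]
    rw [shiftedExponent_update_succ, Function.update_comm hj.symm, shiftedExponent_update_succ,
      Function.update_comm hj, coeff_X_mul, coeff_X_mul]
  have antisymm (a b : ℕ) : coeff (e b a) (X r * K) = -coeff (e a b) (X j * K) := by
    rw [← coeff_rename_mapDomain _ (Equiv.swap r j).injective (X j * K), map_mul, rename_X,
      rename_K, Equiv.swap_apply_right, mapDomain_swap_shiftedExponent ν hj, mul_neg, coeff_neg,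
      neg_neg]
  simp_rw [torusMoment_eq]
  rw [sum_sub_sum_eq_neg_add shift antisymm, ← coeff_add, ← add_mul]
  simp [e]

theorem torusMoment_mem_loopSolutions (M : ℕ) : torusMoment R M ∈ loopSolutions ι R M := by
  refine ⟨fun ν => torusMoment_eq_zero, fun ν r => ?_⟩
  have euler : X r * pderiv r ((∏ i, X i) ^ M * vandermondeSq ι R) =
      (M : MvPolynomial ι R) * ((∏ i, X i) ^ M * vandermondeSq ι R) + ∑ j ∈ Finset.univ.erase r,
        ((X r + X j) * ((∏ i, X i) ^ M * vandermondeSqCofactor R r j) +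
          (∏ i, X i) ^ M * vandermondeSq ι R) := by
    rw [Derivation.leibniz, pderiv_vandermondeSq, smul_eq_mul, smul_eq_mul, mul_add, add_comm,
      mul_left_comm, X_mul_pderiv_prod_X_pow, Finset.mul_sum, Finset.mul_sum, Finset.mul_sum]
    refine congrArg₂ (· + ·) (by ring) (Finset.sum_congr rfl fun j hj => ?_)
    rw [← sub_mul_vandermondeSqCofactor (Finset.ne_of_mem_erase hj)]
    ring
  have coeff_euler := congrArg (coeff (shiftedExponent ν)) euler
  simp only [coeff_X_mul_pderiv, ← C_eq_coe_nat, coeff_add, coeff_C_mul, coeff_sum,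
    Finset.sum_add_distrib, Finset.sum_const, Finset.card_erase_of_mem (Finset.mem_univ r),
    Finset.card_univ, nsmul_eq_mul] at coeff_euler
  rw [← torusMoment, shiftedExponent, Finsupp.equivFunOnFinite_symm_apply_apply, ← shiftedExponent,
    Nat.cast_add] at coeff_euler
  rw [Finset.sum_congr rfl fun j hj =>
    sum_torusMoment_sub_sum_torusMoment M ν (Finset.ne_of_mem_erase hj), Finset.sum_neg_distrib]
  linear_combination coeff_euler

end TorusMoment

section Heine

open MvPolynomial

variable {N : ℕ} {R : Type*} [CommRing R]

theorem vandermondeSq_fin : vandermondeSq (Fin N) R =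
    (vandermonde X).det * (projVandermonde 1 (X : Fin N → MvPolynomial (Fin N) R)).det := by
  have split : (Finset.univ : Finset (Fin N)).offDiag =
      (Finset.univ.filter fun p => p.2 < p.1).disjUnion (Finset.univ.filter fun p => p.1 < p.2)
        (Finset.disjoint_filter.mpr fun p _ h => h.asymm) := by
    ext p
    simp [or_comm, ← lt_or_lt_iff_ne]
  rw [det_vandermonde, det_projVandermonde, vandermondeSq, split, Finset.prod_disjUnion]
  congr 1
  · exact Finset.prod_finset_product_right _ _ _ (by simp)
  · simp only [Pi.one_apply, one_mul]
    exact Finset.prod_finset_product _ _ _ (by simp)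

theorem torusMoment_fin (M : ℕ) (ν : Fin N → ℕ) :
    torusMoment R M ν = ∑ σ : Equiv.Perm (Fin N), ∑ π : Equiv.Perm (Fin N),
      (Equiv.Perm.sign σ : R) * (Equiv.Perm.sign π : R) *
        ∏ i, if M + σ i = ν i + π i then 1 else 0 := by
  rw [torusMoment, vandermondeSq_fin, ← det_transpose, ← det_transpose (projVandermonde _ _),
    det_apply', det_apply', Finset.sum_mul_sum, Finset.mul_sum, coeff_sum]
  refine Finset.sum_congr rfl fun σ _ => ?_
  rw [Finset.mul_sum, coeff_sum]
  refine Finset.sum_congr rfl fun π _ => ?_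
  have monomials : (∏ i, X i : MvPolynomial (Fin N) R) ^ M *
      ((((Equiv.Perm.sign σ : ℤ) : MvPolynomial (Fin N) R) * ∏ i, (vandermonde X)ᵀ (σ i) i) *
        (((Equiv.Perm.sign π : ℤ) : MvPolynomial (Fin N) R) *
          ∏ i, (projVandermonde 1 X)ᵀ (π i) i)) =
      C ((Equiv.Perm.sign σ : R) * (Equiv.Perm.sign π : R)) *
        monomial (Finsupp.equivFunOnFinite.symm fun i => M + σ i + (N - 1 - π i)) 1 := by
    simp only [transpose_apply, vandermonde_apply, projVandermonde_apply, Pi.one_apply, one_pow,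
      one_mul, Fin.val_rev, monomial_eq, map_one, map_mul, map_intCast, Finsupp.prod_fintype,
      pow_zero, implies_true, Finsupp.equivFunOnFinite_symm_apply_apply, pow_add,
      Finset.prod_mul_distrib, Finset.prod_pow]
    simp only [Nat.sub_sub, add_comm 1]
    ring
  rw [monomials, coeff_C_mul, coeff_monomial, Finset.prod_ite_zero, Finset.prod_const_one]
  congr 2
  simp only [Finset.mem_univ, true_imp_iff, DFunLike.ext_iff,
    shiftedExponent, Finsupp.equivFunOnFinite_symm_apply_apply, Fintype.card_fin, eq_iff_iff]
  exact forall_congr' fun i => by have := (π i).isLt; omega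

theorem torusMoment_const (M : ℕ) : torusMoment R M (fun _ : Fin N => M) = N.factorial := by
  have diagonal (σ π : Equiv.Perm (Fin N)) :
      (∏ i, if M + σ i = M + π i then (1 : R) else 0) = if σ = π then 1 else 0 := by
    simp [Finset.prod_ite_zero, Equiv.ext_iff, Fin.ext_iff]
  simp_rw [torusMoment_fin, diagonal]
  simp [← Int.cast_mul, Int.units_coe_mul_self, Fintype.card_perm]

theorem sum_prod_coeff_mul_torusMoment (P : Polynomial R) (M : ℕ) :
    ∑ ν ∈ Fintype.piFinset fun _ : Fin N => Finset.range (P.natDegree + 1),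
        (∏ i, P.coeff (ν i)) * torusMoment R M ν =
      N.factorial * (of fun i j : Fin N => (Polynomial.X ^ (j : ℕ) * P).coeff (M + i)).det := by
  have toeplitz_entry (i j : ℕ) : ∑ k ∈ Finset.range (P.natDegree + 1),
      P.coeff k * (if M + i = k + j then 1 else 0) = (Polynomial.X ^ j * P).coeff (M + i) := by
    rw [Polynomial.coeff_X_pow_mul']
    split_ifs with hj
    · simp only [mul_ite, mul_one, mul_zero, ← Nat.sub_eq_iff_eq_add hj]
      rw [Finset.sum_ite_eq, ite_eq_left_iff, Finset.mem_range, not_lt]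
      exact fun h => (Polynomial.coeff_eq_zero_of_natDegree_lt h).symm
    · exact Finset.sum_eq_zero fun k _ => by rw [if_neg (by omega), mul_zero]
  simp_rw [torusMoment_fin, Finset.mul_sum]
  rw [Finset.sum_comm]
  have inner (σ : Equiv.Perm (Fin N)) : ∑ ν ∈ Fintype.piFinset fun _ : Fin N =>
      Finset.range (P.natDegree + 1), ∑ π : Equiv.Perm (Fin N), (∏ i, P.coeff (ν i)) *
        ((Equiv.Perm.sign σ : R) * (Equiv.Perm.sign π : R) *
          ∏ i, if M + σ i = ν i + π i then 1 else 0) = Equiv.Perm.sign σ *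
      ((of fun i j : Fin N => (Polynomial.X ^ (j : ℕ) * P).coeff (M + i)).submatrix σ id).det := by
    rw [← det_transpose, det_apply', Finset.mul_sum, Finset.sum_comm]
    refine Finset.sum_congr rfl fun π _ => ?_
    simp_rw [transpose_apply, submatrix_apply, of_apply, id, ← toeplitz_entry,
      Finset.prod_univ_sum, Finset.mul_sum, Finset.prod_mul_distrib]
    exact Finset.sum_congr rfl fun ν _ => by ring
  simp_rw [inner, det_permute, ← mul_assoc, ← Int.cast_mul, Int.units_coe_mul_self]
  simp [Fintype.card_perm]

variable (μ : Measure (unitaryGroup (Fin N) ℂ)) [IsProbabilityMeasure μ] [μ.IsMulLeftInvariant]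

theorem factorial_mul_detMoment_rowDet (M : ℕ) (ν : Fin N → ℕ) :
    N.factorial * detMoment μ M (rowDet ℂ ν) = torusMoment ℂ M ν := by
  have difference_mem := sub_mem (Submodule.smul_mem _ (N.factorial : ℂ)
    (detMoment_rowDet_mem_loopSolutions μ M)) (torusMoment_mem_loopSolutions (ι := Fin N) M)
  have := eq_zero_of_mem_loopSolutions difference_mem
    (by simp [detMoment_rowDet_const, torusMoment_const])
  exact sub_eq_zero.mp (congrFun this ν)

theorem integral_star_det_pow_mul_det_aeval (P : Polynomial ℂ) (M : ℕ) :
    ∫ u, star u.1.det ^ M * (Polynomial.aeval u.1 P).det ∂μ =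
      (of fun i j : Fin N => (Polynomial.X ^ (j : ℕ) * P).coeff (M + i)).det := by
  have aeval_eq (u : unitaryGroup (Fin N) ℂ) : (Polynomial.aeval u.1 P).det =
      evalMatrix u.1 (Polynomial.aeval (mvPolynomialX (Fin N) (Fin N) ℂ) P).det := by
    rw [AlgHom.map_det, ← Polynomial.aeval_algHom_apply, AlgHom.mapMatrix_apply,
      evalMatrix_mvPolynomialX]
  simp_rw [aeval_eq, ← detMoment_apply, det_aeval_mvPolynomialX, map_sum, map_smul]
  refine mul_left_cancel₀ (Nat.cast_ne_zero.mpr N.factorial_ne_zero) ?_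
  rw [← sum_prod_coeff_mul_torusMoment, Finset.mul_sum]
  refine Finset.sum_congr rfl fun ν _ => ?_
  rw [← factorial_mul_detMoment_rowDet μ, smul_eq_mul, mul_left_comm]

end Heine

section GeometricSum

open Filter Topology

variable {n : Type*} [Fintype n] [DecidableEq n]

theorem tendsto_det_one_sub_pow {A : Matrix n n ℂ} (hA : Tendsto (A ^ ·) atTop (𝓝 0)) :
    Tendsto (fun R => (1 - A ^ R).det) atTop (𝓝 1) := by
  have det_continuous : Continuous fun B : Matrix n n ℂ => (1 - B).det := by fun_prop
  simpa [Function.comp_def] using (det_continuous.tendsto 0).comp hA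

theorem det_one_sub_ne_zero {A : Matrix n n ℂ} (hA : Tendsto (A ^ ·) atTop (𝓝 0)) :
    (1 - A).det ≠ 0 := by
  intro h
  have tendsto_one := tendsto_det_one_sub_pow hA
  simp only [← geom_sum_mul_neg, det_mul, h, mul_zero] at tendsto_one
  exact zero_ne_one (tendsto_nhds_unique tendsto_const_nhds tendsto_one)

theorem tendsto_det_geom_sum {A : Matrix n n ℂ} (hA : Tendsto (A ^ ·) atTop (𝓝 0)) :
    Tendsto (fun R => (∑ r ∈ Finset.range R, A ^ r).det) atTop (𝓝 (1 - A).det⁻¹) := by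
  have hne := det_one_sub_ne_zero hA
  simpa only [← geom_sum_mul_neg, det_mul, mul_assoc, mul_inv_cancel₀ hne, mul_one, one_mul]
    using (tendsto_det_one_sub_pow hA).mul_const (1 - A).det⁻¹

theorem norm_smul_pow_apply_le {U : Matrix n n ℂ} (hU : U ∈ unitaryGroup n ℂ) (c : ℂ) (r : ℕ)
    (i j : n) : ‖((c • U) ^ r) i j‖ ≤ ‖c‖ ^ r := by
  rw [smul_pow, Matrix.smul_apply, norm_smul, norm_pow]
  exact mul_le_of_le_one_right (by positivity) (entry_norm_bound_of_unitary (pow_mem hU r) i j)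

theorem tendsto_smul_pow_zero {U : Matrix n n ℂ} (hU : U ∈ unitaryGroup n ℂ) {c : ℂ}
    (hc : ‖c‖ < 1) : Tendsto ((c • U) ^ ·) atTop (𝓝 0) :=
  tendsto_pi_nhds.mpr fun i => tendsto_pi_nhds.mpr fun j =>
    squeeze_zero_norm (norm_smul_pow_apply_le hU c · i j)
      (tendsto_pow_atTop_nhds_zero_of_lt_one (norm_nonneg c) hc)

theorem norm_det_geom_sum_smul_le {U : Matrix n n ℂ} (hU : U ∈ unitaryGroup n ℂ) {c : ℂ}
    (hc : ‖c‖ < 1) (R : ℕ) : ‖(∑ r ∈ Finset.range R, (c • U) ^ r).det‖ ≤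
      (Fintype.card n).factorial • (1 - ‖c‖)⁻¹ ^ Fintype.card n := by
  refine det_le (abv := IsAbsoluteValue.toAbsoluteValue (norm : ℂ → ℝ)) fun i j => ?_
  rw [Matrix.sum_apply, ← tsum_geometric_of_lt_one (norm_nonneg c) hc]
  calc ‖∑ r ∈ Finset.range R, ((c • U) ^ r) i j‖
      ≤ ∑ r ∈ Finset.range R, ‖c‖ ^ r :=
        norm_sum_le_of_le _ fun r _ => norm_smul_pow_apply_le hU c r i j
    _ ≤ ∑' r, ‖c‖ ^ r :=
        (summable_geometric_of_lt_one (norm_nonneg c) hc).sum_le_tsum _ fun _ _ => by positivity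

end GeometricSum

section TruncatedKernel

open Filter Topology Polynomial

variable {α β : Type*} [Fintype α] [Fintype β]

/-- A polynomial `K` such that `K / X ^ (card β * R)` tends to
`∏ j (1 - x j X)⁻¹ ∏ l (1 - y l / X)⁻¹` on the unit circle as `R → ∞`. -/
noncomputable def truncatedKernel (x : α → ℂ) (y : β → ℂ) (R : ℕ) : ℂ[X] :=
  (∏ j, ∑ r ∈ Finset.range (R + 1), (C (x j) * X) ^ r) *
    ∏ l, ∑ r ∈ Finset.range (R + 1), C (y l ^ r) * X ^ (R - r)

/-- The average of `(det u)⁻ᵏ det Q(u)` over the unitary group with the weight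
`∏ j det(1 - x j u)⁻¹ ∏ l det(1 - y l u⁻¹)⁻¹`. -/
noncomputable def kernelMoment {N : ℕ} (μ : Measure (unitaryGroup (Fin N) ℂ)) (x : α → ℂ)
    (y : β → ℂ) (k : ℕ) (Q : ℂ[X]) : ℂ :=
  ∫ u, star u.1.det ^ k * (aeval u.1 Q).det *
    ((∏ j, (1 - x j • u.1).det⁻¹) * ∏ l, (1 - y l • star u.1).det⁻¹) ∂μ

variable {N : ℕ}

theorem sum_smul_pow_mul_pow (u : unitaryGroup (Fin N) ℂ) (c : ℂ) (R : ℕ) :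
    ∑ r ∈ Finset.range (R + 1), c ^ r • u.1 ^ (R - r) =
      u.1 ^ R * ∑ r ∈ Finset.range (R + 1), (c • star u.1) ^ r := by
  rw [Finset.mul_sum]
  refine Finset.sum_congr rfl fun r hr => ?_
  have cancel : u.1 ^ r * star u.1 ^ r = 1 := by
    rw [← star_pow]
    exact Unitary.mul_star_self_of_mem (pow_mem u.2 r)
  obtain ⟨s, rfl⟩ := Nat.exists_eq_add_of_le' (Finset.mem_range_succ_iff.mp hr)
  rw [_root_.smul_pow, mul_smul_comm, Nat.add_sub_cancel, pow_add, mul_assoc, cancel, mul_one]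

theorem det_aeval_prod {R n γ : Type*} [CommRing R] [Fintype n] [DecidableEq n] [Fintype γ]
    (A : Matrix n n R) (P : γ → R[X]) : (aeval A (∏ c, P c)).det = ∏ c, (aeval A (P c)).det :=
  map_prod (detMonoidHom.comp (aeval (R := R) A).toRingHom.toMonoidHom) P _

theorem star_det_pow_mul_det_aeval_mul_truncatedKernel (u : unitaryGroup (Fin N) ℂ) (x : α → ℂ)
    (y : β → ℂ) (R k : ℕ) (Q : ℂ[X]) :
    star u.1.det ^ (Fintype.card β * R + k) * (aeval u.1 (Q * truncatedKernel x y R)).det =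
      star u.1.det ^ k * (aeval u.1 Q).det *
        ((∏ j, (∑ r ∈ Finset.range (R + 1), (x j • u.1) ^ r).det) *
          ∏ l, (∑ r ∈ Finset.range (R + 1), (y l • star u.1) ^ r).det) := by
  have unimodular : star u.1.det ^ (Fintype.card β * R) * (u.1.det ^ R) ^ Fintype.card β = 1 := by
    rw [← pow_mul, mul_comm R, ← mul_pow, star_det_mul_det, one_pow]
  simp_rw [truncatedKernel, map_mul, det_mul, det_aeval_prod, map_sum, map_mul, map_pow, map_mul,
    aeval_C, aeval_X, ← map_pow, ← Algebra.smul_def, sum_smul_pow_mul_pow, det_mul, det_pow,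
    Finset.prod_mul_distrib, Finset.prod_const, Finset.card_univ]
  rw [pow_add]
  linear_combination star u.1.det ^ k * (aeval u.1 Q).det *
    ((∏ j, (∑ r ∈ Finset.range (R + 1), (x j • u.1) ^ r).det) *
      ∏ l, (∑ r ∈ Finset.range (R + 1), (y l • star u.1) ^ r).det) * unimodular

theorem tendsto_kernelMoment (μ : Measure (unitaryGroup (Fin N) ℂ)) [IsFiniteMeasure μ]
    {x : α → ℂ} {y : β → ℂ} (hx : ∀ j, ‖x j‖ < 1) (hy : ∀ l, ‖y l‖ < 1) (k : ℕ) (Q : ℂ[X]) :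
    Tendsto (fun R => ∫ u, star u.1.det ^ (Fintype.card β * R + k) *
      (aeval u.1 (Q * truncatedKernel x y R)).det ∂μ) atTop (𝓝 (kernelMoment μ x y k Q)) := by
  have star_mem (u : unitaryGroup (Fin N) ℂ) : star u.1 ∈ unitaryGroup (Fin N) ℂ := (star u).2
  have continuous_aeval : Continuous fun u : unitaryGroup (Fin N) ℂ => aeval u.1 Q := by
    simp only [aeval_eq_sum_range]
    fun_prop
  let bound (c : ℂ) : ℝ := (Fintype.card (Fin N)).factorial • (1 - ‖c‖)⁻¹ ^ Fintype.card (Fin N)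
  simp_rw [star_det_pow_mul_det_aeval_mul_truncatedKernel, kernelMoment]
  refine tendsto_integral_of_dominated_convergence (fun u : unitaryGroup (Fin N) ℂ =>
    ‖star u.1.det ^ k * (aeval u.1 Q).det‖ * ((∏ j, bound (x j)) * ∏ l, bound (y l)))
    (fun R => ?_) ?_ (fun R => .of_forall fun u => ?_) (.of_forall fun u => ?_)
  · exact Continuous.aestronglyMeasurable (by fun_prop)
  · have continuous_weight : Continuous fun u : unitaryGroup (Fin N) ℂ =>
        ‖star u.1.det ^ k * (aeval u.1 Q).det‖ := by fun_prop
    exact (continuous_weight.integrable_of_hasCompactSupport (.of_compactSpace _)).mul_const _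
  · have bound_nonneg {c : ℂ} (hc : ‖c‖ < 1) : 0 ≤ bound c := by
      have := sub_nonneg.mpr hc.le
      positivity
    rw [norm_mul, norm_mul (∏ j, _), norm_prod, norm_prod]
    gcongr with j _ l _
    · exact Finset.prod_nonneg fun j _ => bound_nonneg (hx j)
    · exact norm_det_geom_sum_smul_le u.2 (hx j) (R + 1)
    · exact norm_det_geom_sum_smul_le (star_mem u) (hy l) (R + 1)
  · refine tendsto_const_nhds.mul (.mul ?_ ?_)
    · exact tendsto_finsetProd _ fun j _ =>
        (tendsto_det_geom_sum (tendsto_smul_pow_zero u.2 (hx j))).comp (tendsto_add_atTop_nat 1)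
    · exact tendsto_finsetProd _ fun l _ =>
        (tendsto_det_geom_sum (tendsto_smul_pow_zero (star_mem u) (hy l))).comp
          (tendsto_add_atTop_nat 1)

end TruncatedKernel

section LaurentCoeff

open Filter Topology Polynomial

variable {α β : Type*} [Fintype α] [Fintype β]

theorem det_aeval_X_sub_C {N : ℕ} (u : unitaryGroup (Fin N) ℂ) (c : ℂ) :
    (aeval u.1 (X - C c)).det = u.1.det * (1 - c • star u.1).det := by
  rw [← det_mul, mul_sub, mul_one, mul_smul_comm, Unitary.mul_star_self_of_mem u.2, map_sub,
    aeval_X, aeval_C, Algebra.algebraMap_eq_smul_one]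

theorem kernelMoment_prod_X_sub_C_mul {N : ℕ} (μ : Measure (unitaryGroup (Fin N) ℂ)) (x : α → ℂ)
    {y : β → ℂ} (hy : ∀ l, ‖y l‖ < 1) (k : ℕ) (Q : ℂ[X]) :
    kernelMoment μ x y (Fintype.card β + k) ((∏ l, (X - C (y l))) * Q) =
      kernelMoment μ x (![] : Fin 0 → ℂ) k Q := by
  refine integral_congr_ae (.of_forall fun u => ?_)
  have cancel : (∏ l, (1 - y l • star u.1).det) * ∏ l, (1 - y l • star u.1).det⁻¹ = 1 := by
    rw [← Finset.prod_mul_distrib]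
    exact Finset.prod_eq_one fun l _ => mul_inv_cancel₀
      (det_one_sub_ne_zero (tendsto_smul_pow_zero (star u).2 (hy l)))
  have unimodular : star u.1.det ^ Fintype.card β * u.1.det ^ Fintype.card β = 1 := by
    rw [← mul_pow, star_det_mul_det, one_pow]
  simp only [map_mul, det_mul, det_aeval_prod, det_aeval_X_sub_C, Finset.prod_mul_distrib,
    Finset.prod_const, Finset.card_univ, Finset.univ_eq_empty, Finset.prod_empty, mul_one, pow_add]
  linear_combination star u.1.det ^ k * (aeval u.1 Q).det * (∏ j, (1 - x j • u.1).det⁻¹) *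
    (star u.1.det ^ Fintype.card β * u.1.det ^ Fintype.card β * cancel + unimodular)

theorem kernelMoment_prod_one_sub_C_mul_X_mul {N : ℕ} (μ : Measure (unitaryGroup (Fin N) ℂ))
    {x : α → ℂ} (hx : ∀ j, ‖x j‖ < 1) (y : β → ℂ) (k : ℕ) (Q : ℂ[X]) :
    kernelMoment μ x y k ((∏ j, (1 - C (x j) * X)) * Q) =
      kernelMoment μ (![] : Fin 0 → ℂ) y k Q := by
  refine integral_congr_ae (.of_forall fun u => ?_)
  have cancel : (∏ j, (1 - x j • u.1).det) * ∏ j, (1 - x j • u.1).det⁻¹ = 1 := by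
    rw [← Finset.prod_mul_distrib]
    exact Finset.prod_eq_one fun j _ => mul_inv_cancel₀
      (det_one_sub_ne_zero (tendsto_smul_pow_zero u.2 (hx j)))
  simp only [map_mul, det_mul, det_aeval_prod, map_sub, map_one, aeval_C, aeval_X,
    ← Algebra.smul_def, Finset.univ_eq_empty, Finset.prod_empty, one_mul]
  linear_combination star u.1.det ^ k * (aeval u.1 Q).det * (∏ l, (1 - y l • star u.1).det⁻¹) *
    cancel

/-- The Haar probability measure of the unit circle `U(1)`. -/
noncomputable def unitaryOneHaar : Measure (unitaryGroup (Fin 1) ℂ) :=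
  Measure.haarMeasure ⊤

instance : IsProbabilityMeasure unitaryOneHaar :=
  ⟨Measure.haarMeasure_self⟩

instance : unitaryOneHaar.IsMulLeftInvariant :=
  Measure.isMulLeftInvariant_haarMeasure ⊤

theorem tendsto_coeff_mul_truncatedKernel {x : α → ℂ} {y : β → ℂ} (hx : ∀ j, ‖x j‖ < 1)
    (hy : ∀ l, ‖y l‖ < 1) (k : ℕ) (Q : ℂ[X]) :
    Tendsto (fun R => (Q * truncatedKernel x y R).coeff (Fintype.card β * R + k)) atTop
      (𝓝 (kernelMoment unitaryOneHaar x y k Q)) := by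
  have tendsto := tendsto_kernelMoment unitaryOneHaar hx hy k Q
  simp only [integral_star_det_pow_mul_det_aeval] at tendsto
  simpa using tendsto

/-- The coefficient of `t ^ k` in the Laurent expansion on the unit circle of
`Q(t) ∏ j (1 - x j t)⁻¹ ∏ l (1 - y l / t)⁻¹`, as a linear functional of `Q`. -/
noncomputable def laurentCoeff {x : α → ℂ} {y : β → ℂ} (hx : ∀ j, ‖x j‖ < 1)
    (hy : ∀ l, ‖y l‖ < 1) (k : ℕ) : ℂ[X] →ₗ[ℂ] ℂ :=
  linearMapOfTendsto (kernelMoment unitaryOneHaar x y k)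
    (fun R => lcoeff ℂ (Fintype.card β * R + k) ∘ₗ LinearMap.mulRight ℂ (truncatedKernel x y R))
    (tendsto_pi_nhds.mpr (tendsto_coeff_mul_truncatedKernel hx hy k))

variable {x : α → ℂ} {y : β → ℂ} (hx : ∀ j, ‖x j‖ < 1) (hy : ∀ l, ‖y l‖ < 1)

theorem laurentCoeff_apply (k : ℕ) (Q : ℂ[X]) :
    laurentCoeff hx hy k Q = kernelMoment unitaryOneHaar x y k Q :=
  rfl

theorem kernelMoment_eq_det_laurentCoeff {N : ℕ} (μ : Measure (unitaryGroup (Fin N) ℂ))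
    [IsProbabilityMeasure μ] [μ.IsMulLeftInvariant] (k : ℕ) (Q : ℂ[X]) :
    kernelMoment μ x y k Q =
      (of fun i j : Fin N => laurentCoeff hx hy (k + i) (X ^ (j : ℕ) * Q)).det := by
  refine tendsto_nhds_unique (tendsto_kernelMoment μ hx hy k Q) ?_
  simp_rw [integral_star_det_pow_mul_det_aeval]
  have det_continuous : Continuous (det : Matrix (Fin N) (Fin N) ℂ → ℂ) := by fun_prop
  refine (det_continuous.tendsto _).comp (tendsto_pi_nhds.mpr fun i => tendsto_pi_nhds.mpr fun j =>
    ?_)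
  simp_rw [of_apply, ← mul_assoc, add_assoc]
  exact tendsto_coeff_mul_truncatedKernel hx hy (k + i) (X ^ (j : ℕ) * Q)

theorem laurentCoeff_prod_X_sub_C_mul_X_pow {k m : ℕ} (hkm : k < m) :
    laurentCoeff hx hy (Fintype.card β + k) ((∏ l, (X - C (y l))) * X ^ m) = 0 := by
  rw [laurentCoeff_apply, kernelMoment_prod_X_sub_C_mul _ _ hy]
  have tendsto := tendsto_coeff_mul_truncatedKernel (y := ![]) hx (by simp) k (X ^ m)
  simp only [Fintype.card_fin, zero_mul, zero_add, coeff_X_pow_mul', hkm.not_ge, if_false]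
    at tendsto
  exact tendsto_nhds_unique tendsto tendsto_const_nhds

theorem monic_sum_C_mul_X_pow {K : Type*} [CommRing K] [Nontrivial K] (f : ℕ → K)
    (hf : f 0 = 1) (R : ℕ) :
    (∑ r ∈ Finset.range (R + 1), C (f r) * X ^ (R - r)).Monic ∧
      (∑ r ∈ Finset.range (R + 1), C (f r) * X ^ (R - r)).natDegree = R := by
  have coeff_eq_one : (∑ r ∈ Finset.range (R + 1), C (f r) * X ^ (R - r)).coeff R = 1 := by
    rw [finsetSum_coeff, Finset.sum_eq_single_of_mem 0 (by simp) fun r hr hr0 => ?_]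
    · simp [hf]
    · have := Finset.mem_range_succ_iff.mp hr
      rw [coeff_C_mul_X_pow, if_neg (by omega)]
  have natDegree_le : (∑ r ∈ Finset.range (R + 1), C (f r) * X ^ (R - r)).natDegree ≤ R :=
    natDegree_sum_le_of_forall_le _ _ fun r _ =>
      (natDegree_C_mul_X_pow_le _ _).trans (Nat.sub_le R r)
  exact ⟨monic_of_natDegree_le_of_coeff_eq_one R natDegree_le coeff_eq_one,
    natDegree_eq_of_le_of_coeff_ne_zero natDegree_le (coeff_eq_one ▸ one_ne_zero)⟩

theorem laurentCoeff_prod_one_sub_C_mul_X_mul_X_pow {k r : ℕ} (hrk : r ≤ k) :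
    laurentCoeff hx hy k ((∏ j, (1 - C (x j) * X)) * X ^ r) = if r = k then 1 else 0 := by
  rw [laurentCoeff_apply, kernelMoment_prod_one_sub_C_mul_X_mul _ hx]
  have tendsto := tendsto_coeff_mul_truncatedKernel (x := ![]) (by simp) hy k (X ^ r)
  refine tendsto_nhds_unique tendsto (tendsto_const_nhds.congr fun R => ?_)
  have factor (l : β) := monic_sum_C_mul_X_pow (y l ^ ·) (pow_zero _) R
  have monic := monic_prod_of_monic Finset.univ _ fun l _ => (factor l).1
  have natDegree := natDegree_prod_of_monic Finset.univ _ fun l _ => (factor l).1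
  simp only [(factor _).2, Finset.sum_const, Finset.card_univ, smul_eq_mul] at natDegree
  obtain ⟨s, rfl⟩ := Nat.exists_eq_add_of_le' hrk
  simp only [truncatedKernel, Finset.univ_eq_empty, Finset.prod_empty, one_mul]
  rw [← add_assoc, coeff_X_pow_mul]
  obtain rfl | hs := Nat.eq_zero_or_pos s
  · rw [add_zero, ← natDegree, monic.coeff_natDegree, zero_add, if_pos rfl]
  · rw [coeff_eq_zero_of_natDegree_lt (by omega), if_neg (by omega)]

end LaurentCoeff

section FunctionalDeterminants

open Polynomial

variable {K : Type*} [CommRing K]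

theorem det_functional_eq_mul_det_coeff {ι : Type*} [Fintype ι] [DecidableEq ι] {m : ℕ}
    (F : ι → K[X] →ₗ[K] K) (e : ι ≃ Fin m) {P : Fin m → K[X]} (hP : ∀ j, (P j).natDegree < m) :
    (of fun r c => F r (P (e c))).det =
      (of fun r c => F r (X ^ (e c : ℕ))).det * (of fun i j : Fin m => (P j).coeff i).det := by
  rw [← det_submatrix_equiv_self e (of fun i j : Fin m => (P j).coeff i), ← det_mul]
  congr 1
  ext r c
  rw [of_apply, (P (e c)).as_sum_range_C_mul_X_pow' (hP _), map_sum, mul_apply,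
    ← Fin.sum_univ_eq_sum_range fun i => F r (C ((P (e c)).coeff i) * X ^ i), ← e.sum_comp]
  simp only [← smul_eq_C_mul, map_smul, smul_eq_mul, mul_comm (F r _), of_apply, submatrix_apply]

theorem natDegree_X_pow_mul_prod_X_sub_C [Nontrivial K] {ι : Type*} [Fintype ι] (b : ι → K)
    (j : ℕ) :
    (X ^ j * ∏ k, (X - C (b k))).natDegree = j + Fintype.card ι := by
  have monic := monic_prod_of_monic Finset.univ _ fun k _ => monic_X_sub_C (b k)
  rw [(monic_X_pow j).natDegree_mul monic,
    natDegree_prod_of_monic _ _ fun k _ => monic_X_sub_C (b k)]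
  simp

theorem det_leval_functional [Nontrivial K] {n N : ℕ} (b : Fin n → K)
    (ℓ : Fin N → K[X] →ₗ[K] K) :
    (of fun r c => Sum.elim (fun k => leval (b k)) ℓ r (X ^ (finSumFinEquiv c : ℕ))).det =
      (vandermonde b).det * (of fun i j : Fin N => ℓ i (X ^ (j : ℕ) * ∏ k, (X - C (b k)))).det := by
  let P : Fin (n + N) → K[X] :=
    Fin.addCases (fun r => X ^ (r : ℕ)) fun j => X ^ (j : ℕ) * ∏ k, (X - C (b k))
  have natDegree_P (i : Fin (n + N)) : (P i).natDegree = i := by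
    refine Fin.addCases (fun r => ?_) (fun j => ?_) i
    · simp [P]
    · simp [P, natDegree_X_pow_mul_prod_X_sub_C, add_comm]
  have monic_P (i : Fin (n + N)) : (P i).Monic := by
    refine Fin.addCases (fun r => ?_) (fun j => ?_) i
    · simp [P]
    · simpa [P] using
        (monic_X_pow _).mul (monic_prod_of_monic _ _ fun k _ => monic_X_sub_C (b k))
  have change_basis := det_functional_eq_mul_det_coeff (Sum.elim (fun k => leval (b k)) ℓ)
    finSumFinEquiv fun j => (natDegree_P j).trans_lt j.2
  rw [det_matrixOfPolynomials P natDegree_P monic_P, mul_one] at change_basis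
  rw [← change_basis, ← det_fromBlocks_zero₁₂ _ (of fun i j : Fin _ => ℓ i (X ^ (j : ℕ)))]
  congr 1
  ext (k | i) (r | j)
  · simp [P, leval]
  · simp [P, leval, eval_prod, Finset.prod_eq_zero (Finset.mem_univ k)]
  · simp [P]
  · simp [P]

theorem det_vandermonde_append [Nontrivial K] {p q : ℕ} (b : Fin p → K) (c : Fin q → K) :
    (vandermonde (Fin.append b c)).det =
      (vandermonde b).det * (vandermonde c).det * ∏ l, ∏ j, (c l - b j) := by
  rw [mul_assoc, mul_comm (vandermonde c).det, ← det_diagonal, ← det_mul,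
    ← det_submatrix_equiv_self finSumFinEquiv]
  have block_eval := det_leval_functional b fun l => leval (c l)
  convert block_eval using 2
  · ext (k | l) s <;> simp [leval]
  · congr 1
    ext l j
    simp [leval, eval_prod, mul_comm]

end FunctionalDeterminants

section Sylvester

open Polynomial

variable {K : Type*} [CommRing K]

/-- The polynomials whose coefficients are the columns of `sylvester f g m n`: the first `m`
shifts of `g` followed by the first `n` shifts of `f`. -/
noncomputable def sylvesterBasis (f g : K[X]) (m n : ℕ) : Fin (m + n) → K[X] :=
  Fin.addCases (fun r => g * X ^ (r : ℕ)) fun r => f * X ^ (r : ℕ)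

theorem natDegree_sylvesterBasis_lt {f g : K[X]} {m n : ℕ} (hf : f.natDegree ≤ m)
    (hg : g.natDegree ≤ n) (j : Fin (m + n)) : (sylvesterBasis f g m n j).natDegree < m + n := by
  refine Fin.addCases (fun r => ?_) (fun r => ?_) j
  · have := natDegree_mul_le_of_le hg (natDegree_pow_le_of_le (r : ℕ) (natDegree_X_le (R := K)))
    simp only [sylvesterBasis, Fin.addCases_left]
    omega
  · have := natDegree_mul_le_of_le hf (natDegree_pow_le_of_le (r : ℕ) (natDegree_X_le (R := K)))
    simp only [sylvesterBasis, Fin.addCases_right]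
    omega

theorem coeff_mul_X_pow_eq_ite {P : K[X]} {n : ℕ} (hP : P.natDegree ≤ n) (i j : ℕ) :
    (P * X ^ j).coeff i = if i ∈ Set.Icc j (j + n) then P.coeff (i - j) else 0 := by
  simp only [coeff_mul_X_pow', Set.mem_Icc]
  split_ifs with hji hin hin
  · rfl
  · exact coeff_eq_zero_of_natDegree_lt (by omega)
  · omega
  · rfl

theorem sylvester_eq_coeff {f g : K[X]} {m n : ℕ} (hf : f.natDegree ≤ m) (hg : g.natDegree ≤ n) :
    sylvester f g m n = of fun i j : Fin (m + n) => (sylvesterBasis f g m n j).coeff i := by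
  ext i j
  refine Fin.addCases (fun r => ?_) (fun r => ?_) j
  · simp [sylvester, sylvesterBasis, coeff_mul_X_pow_eq_ite hg]
  · simp [sylvester, sylvesterBasis, coeff_mul_X_pow_eq_ite hf]

theorem det_functional_mul_X_pow_eq_one {N k : ℕ} {ℓ : Fin N → K[X] →ₗ[K] K} {f : K[X]}
    (hℓf : ∀ i : Fin N, ∀ r ≤ k + i, ℓ i (f * X ^ r) = if r = k + i then 1 else 0) :
    (of fun i j : Fin N => ℓ i (f * X ^ (k + j : ℕ))).det = 1 := by
  rw [det_of_isUpperTriangular fun i j hji => ?_]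
  · simp [hℓf]
  · have hji : j < i := hji
    rw [of_apply, hℓf i _ (by simpa using hji.le), if_neg (by simpa [Fin.val_inj] using hji.ne)]

/-- The square matrix with rows `(s t, s t * t, …, s t * t ^ (p - 1), r t, …, r t * t ^ (q - 1))`,
where `t` runs over the nodes `b k`: two weighted Vandermonde blocks side by side. -/
def blockVandermonde {p q : ℕ} (s r : K → K) (b : Fin (p + q) → K) :
    Matrix (Fin (p + q)) (Fin (p + q)) K :=
  of fun k => Fin.addCases (fun j => s (b k) * b k ^ (j : ℕ)) fun l => r (b k) * b k ^ (l : ℕ)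

theorem det_leval_functional_mul_resultant [Nontrivial K] {p q N : ℕ} (b : Fin (p + q) → K)
    (ℓ : Fin N → K[X] →ₗ[K] K) {f g : K[X]} (hf : f.natDegree ≤ p) (hg : g.natDegree ≤ q)
    (hℓg : ∀ i, ∀ r < p, ℓ i (g * X ^ (N + r)) = 0)
    (hℓf : ∀ i : Fin N, ∀ r ≤ q + i, ℓ i (f * X ^ r) = if r = q + i then 1 else 0) :
    (vandermonde b).det * (of fun i j : Fin N => ℓ i (X ^ (j : ℕ) * ∏ k, (X - C (b k)))).det *
        f.resultant (g * X ^ N) p (q + N) =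
      (blockVandermonde (fun t => g.eval t * t ^ N) (fun t => f.eval t) b).det := by
  have natDegree_g : (g * X ^ N).natDegree ≤ q + N :=
    natDegree_mul_le_of_le hg (natDegree_X_pow_le N)
  have change_basis := det_functional_eq_mul_det_coeff (Sum.elim (fun k => leval (b k)) ℓ)
    (finSumFinEquiv.trans (finCongr (add_assoc p q N)))
    (natDegree_sylvesterBasis_lt hf natDegree_g)
  rw [← sylvester_eq_coeff hf natDegree_g] at change_basis
  simp only [Equiv.trans_apply, finCongr_apply, Fin.val_cast] at change_basis
  have cast_left (j : Fin p) : Fin.cast (add_assoc p q N) (Fin.castAdd N (Fin.castAdd q j)) =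
      Fin.castAdd (q + N) j := rfl
  have cast_right (l : Fin q) : Fin.cast (add_assoc p q N) (Fin.castAdd N (Fin.natAdd p l)) =
      Fin.natAdd p (Fin.castAdd N l) := rfl
  have cast_inr (i : Fin N) : Fin.cast (add_assoc p q N) (Fin.natAdd (p + q) i) =
      Fin.natAdd p (Fin.natAdd q i) := Fin.ext (add_assoc p q i)
  rw [← det_leval_functional, resultant, ← change_basis]
  refine Eq.trans ?_ (mul_one _)
  rw [← det_functional_mul_X_pow_eq_one hℓf,
    ← det_fromBlocks_zero₂₁ _ (of fun k (j : Fin N) => leval (b k) (f * X ^ (q + j : ℕ)))]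
  congr 1
  ext (k | i) (c | j)
  · refine Fin.addCases (fun r => ?_) (fun r => ?_) c <;>
      simp [blockVandermonde, sylvesterBasis, leval, cast_left, cast_right, pow_add, mul_assoc]
  · simp [sylvesterBasis, leval, cast_inr]
  · refine Fin.addCases (fun r => ?_) (fun r => ?_) c
    · simpa [sylvesterBasis, cast_left, pow_add, mul_assoc] using hℓg i r r.2
    · simp [sylvesterBasis, cast_right, hℓf i r (by omega),
        (r.2.trans_le (Nat.le_add_right q i)).ne]
  · simp [sylvesterBasis, cast_inr]

theorem natDegree_prod_one_sub_C_mul_X_le {p : ℕ} (x : Fin p → K) :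
    (∏ j, (1 - C (x j) * X)).natDegree ≤ p := by
  refine (natDegree_prod_le _ _).trans ((Finset.sum_le_card_nsmul _ _ 1 fun j _ => ?_).trans ?_)
  · compute_degree
  · simp

theorem resultant_prod_one_sub_C_mul_X [IsDomain K] {p q : ℕ} (x : Fin p → K) (y : Fin q → K)
    (N : ℕ) :
    (∏ j, (1 - C (x j) * X)).resultant ((∏ l, (X - C (y l))) * X ^ N) p (q + N) =
      (-1) ^ (p * (q + N)) * ∏ l, ∏ j, (1 - x j * y l) := by
  have natDegree_le := natDegree_prod_one_sub_C_mul_X_le x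
  have coeff_zero : (∏ j, (1 - C (x j) * X)).coeff 0 = 1 := by
    simp [coeff_zero_eq_eval_zero, eval_prod]
  have resultant_Y := resultant_prod_right Finset.univ _ (fun l => X - C (y l)) p natDegree_le
    (by simp)
  have resultant_mul := resultant_mul_right _ (∏ l, (X - C (y l))) (X ^ N) p natDegree_le
  simp only [natDegree_finsetProd_X_sub_C_eq_card, Finset.card_univ, Fintype.card_fin,
    natDegree_X_pow, natDegree_X_sub_C] at resultant_Y resultant_mul
  rw [resultant_mul, resultant_Y, resultant_X_pow_right _ _ _ natDegree_le, coeff_zero]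
  simp only [resultant_X_sub_C_right _ _ _ natDegree_le, eval_prod, eval_sub, eval_one, eval_mul,
    eval_C, eval_X, Finset.prod_mul_distrib, Finset.prod_const, Finset.card_univ, Fintype.card_fin,
    ← pow_mul, one_pow, mul_one, mul_add, pow_add]
  ring

end Sylvester

section Laplace

open Polynomial

theorem factorial_mul_factorial_mul_det {R m n ι : Type*} [CommRing R] [Fintype m] [DecidableEq m]
    [Fintype n] [DecidableEq n] [Fintype ι] [DecidableEq ι] (e : m ⊕ n ≃ ι) (M : Matrix ι ι R) :
    ((Fintype.card m).factorial * (Fintype.card n).factorial : R) * M.det =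
      ∑ w : Equiv.Perm ι, (Equiv.Perm.sign w : R) *
        ((M.submatrix (w ∘ e ∘ Sum.inl) (e ∘ Sum.inl)).det *
          (M.submatrix (w ∘ e ∘ Sum.inr) (e ∘ Sum.inr)).det) := by
  have det_eq_sum_translate (τ : Equiv.Perm m × Equiv.Perm n) :
      M.det = ∑ w : Equiv.Perm ι, (Equiv.Perm.sign w : R) *
        ((Equiv.Perm.sign τ.1 * ∏ j, M (w (e (.inl (τ.1 j)))) (e (.inl j))) *
          (Equiv.Perm.sign τ.2 * ∏ l, M (w (e (.inr (τ.2 l)))) (e (.inr l)))) := by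
    rw [det_apply', ← Equiv.sum_comp (Equiv.mulRight (e.permCongr (Equiv.sumCongr τ.1 τ.2)))]
    refine Finset.sum_congr rfl fun w _ => ?_
    rw [← e.prod_comp, Fintype.prod_sum_type]
    simp only [Equiv.coe_mulRight, Equiv.Perm.sign_mul, Equiv.Perm.sign_permCongr,
      Equiv.Perm.sign_sumCongr, Units.val_mul, Int.cast_mul, Equiv.Perm.coe_mul,
      Function.comp_apply, Equiv.permCongr_apply, Equiv.symm_apply_apply, Equiv.sumCongr_apply,
      Sum.map_inl, Sum.map_inr]
    ring
  calc ((Fintype.card m).factorial * (Fintype.card n).factorial : R) * M.det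
      = ∑ _τ : Equiv.Perm m × Equiv.Perm n, M.det := by simp [Fintype.card_perm]
    _ = _ := Finset.sum_congr rfl fun τ _ => det_eq_sum_translate τ
    _ = _ := Finset.sum_comm
    _ = _ := Finset.sum_congr rfl fun w _ => by
      simp only [det_apply', ← Finset.mul_sum, Fintype.sum_prod_type, Finset.sum_mul_sum,
        submatrix_apply, Function.comp_apply]

theorem sign_mul_det_vandermonde {K : Type*} [CommRing K] [Nontrivial K] {p q : ℕ}
    (w : Equiv.Perm (Fin (p + q))) (b : Fin (p + q) → K) :
    (Equiv.Perm.sign w : K) * (vandermonde b).det =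
      (vandermonde fun j => b (w (Fin.castAdd q j))).det *
        (vandermonde fun l => b (w (Fin.natAdd p l))).det *
          ∏ l, ∏ j, (b (w (Fin.natAdd p l)) - b (w (Fin.castAdd q j))) := by
  rw [← det_vandermonde_append, ← det_permute]
  congr 1
  ext i j
  refine Fin.addCases (fun r => ?_) (fun r => ?_) i <;> simp [vandermonde]

variable {K : Type*} [Field K] {p q : ℕ}

theorem factorial_mul_factorial_mul_det_blockVandermonde {b : Fin (p + q) → K}
    (hb : Function.Injective b) (s r : K → K) :
    (p.factorial * q.factorial : K) * (blockVandermonde s r b).det =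
      (vandermonde b).det * ∑ w : Equiv.Perm (Fin (p + q)),
        (∏ j, s (b (w (Fin.castAdd q j)))) * (∏ l, r (b (w (Fin.natAdd p l)))) *
          ∏ l, ∏ j, (b (w (Fin.natAdd p l)) - b (w (Fin.castAdd q j)))⁻¹ := by
  have laplace := factorial_mul_factorial_mul_det finSumFinEquiv (blockVandermonde s r b)
  rw [Fintype.card_fin, Fintype.card_fin] at laplace
  rw [laplace, Finset.mul_sum]
  refine Finset.sum_congr rfl fun w _ => ?_
  have det_left : ((blockVandermonde s r b).submatrix (w ∘ finSumFinEquiv ∘ Sum.inl)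
      (finSumFinEquiv ∘ Sum.inl)).det = (∏ j, s (b (w (Fin.castAdd q j)))) *
        (vandermonde fun j => b (w (Fin.castAdd q j))).det := by
    rw [← det_mul_column]
    congr 1
    ext i j
    simp [blockVandermonde]
  have det_right : ((blockVandermonde s r b).submatrix (w ∘ finSumFinEquiv ∘ Sum.inr)
      (finSumFinEquiv ∘ Sum.inr)).det = (∏ l, r (b (w (Fin.natAdd p l)))) *
        (vandermonde fun l => b (w (Fin.natAdd p l))).det := by
    rw [← det_mul_column]
    congr 1
    ext i j
    simp [blockVandermonde]
  have cancel : (∏ l, ∏ j, (b (w (Fin.natAdd p l)) - b (w (Fin.castAdd q j)))) *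
      ∏ l, ∏ j, (b (w (Fin.natAdd p l)) - b (w (Fin.castAdd q j)))⁻¹ = 1 := by
    simp only [← Finset.prod_mul_distrib]
    refine Finset.prod_eq_one fun l _ => Finset.prod_eq_one fun j _ => mul_inv_cancel₀ ?_
    have ne : Fin.natAdd p l ≠ Fin.castAdd q j :=
      Fin.ne_of_val_ne (by simpa using (j.2.trans_le (Nat.le_add_right p l)).ne')
    exact sub_ne_zero.mpr (hb.ne (w.injective.ne ne))
  have sign_mul_self : (Equiv.Perm.sign w : K) * Equiv.Perm.sign w = 1 := by
    rw [← Int.cast_mul, Int.units_coe_mul_self, Int.cast_one]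
  rw [det_left, det_right, ← one_mul (vandermonde b).det, ← sign_mul_self,
    mul_assoc (Equiv.Perm.sign w : K), sign_mul_det_vandermonde]
  linear_combination -(Equiv.Perm.sign w : K) * (∏ j, s (b (w (Fin.castAdd q j)))) *
    (vandermonde fun j => b (w (Fin.castAdd q j))).det * (∏ l, r (b (w (Fin.natAdd p l)))) *
    (vandermonde fun l => b (w (Fin.natAdd p l))).det * cancel

end Laplace

section Ratios

open Polynomial

variable {N p q : ℕ} {x : Fin p → ℂ} {y : Fin q → ℂ}

theorem factorial_mul_factorial_mul_resultant_mul_kernelMoment (hx : ∀ j, ‖x j‖ < 1)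
    (hy : ∀ l, ‖y l‖ < 1) {b : Fin (p + q) → ℂ} (hb : Function.Injective b)
    (μ : Measure (unitaryGroup (Fin N) ℂ)) [IsProbabilityMeasure μ] [μ.IsMulLeftInvariant] :
    (p.factorial * q.factorial : ℂ) * ((-1) ^ (p * (q + N)) * ∏ l, ∏ j, (1 - x j * y l)) *
        kernelMoment μ x y q (∏ k, (X - C (b k))) =
      ∑ w : Equiv.Perm (Fin (p + q)),
        (∏ j, (∏ l, (b (w (Fin.castAdd q j)) - y l)) * b (w (Fin.castAdd q j)) ^ N) *
          (∏ l, ∏ j, (1 - x j * b (w (Fin.natAdd p l)))) *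
            ∏ l, ∏ j, (b (w (Fin.natAdd p l)) - b (w (Fin.castAdd q j)))⁻¹ := by
  have linear_system := det_leval_functional_mul_resultant b
    (fun i : Fin N => laurentCoeff hx hy (q + i)) (natDegree_prod_one_sub_C_mul_X_le x)
    (g := ∏ l, (X - C (y l))) (by simp)
    (fun i r _ => by
      simpa using laurentCoeff_prod_X_sub_C_mul_X_pow hx hy (i.2.trans_le (Nat.le_add_right N r)))
    fun i r hr => laurentCoeff_prod_one_sub_C_mul_X_mul_X_pow hx hy hr
  rw [← kernelMoment_eq_det_laurentCoeff hx hy μ, resultant_prod_one_sub_C_mul_X] at linear_system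
  refine mul_left_cancel₀ (det_vandermonde_ne_zero_iff.mpr hb) ?_
  have laplace := factorial_mul_factorial_mul_det_blockVandermonde hb
    (fun t => (∏ l, (X - C (y l))).eval t * t ^ N) (fun t => (∏ j, (1 - C (x j) * X)).eval t)
  rw [← linear_system] at laplace
  simp only [eval_prod, eval_sub, eval_mul, eval_one, eval_X, eval_C] at laplace
  linear_combination laplace

theorem det_one_sub_smul_eq (u : Matrix (Fin N) (Fin N) ℂ) {a : ℂ} (ha : a ≠ 0) :
    (1 - a • u).det = (-a) ^ N * (aeval u (X - C a⁻¹)).det := by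
  have : 1 - a • u = (-a) • aeval u (X - C a⁻¹) := by
    rw [map_sub, aeval_X, aeval_C, Algebra.algebraMap_eq_smul_one, smul_sub, smul_smul, neg_mul,
      mul_inv_cancel₀ ha, neg_smul, neg_smul, one_smul, sub_neg_eq_add, neg_add_eq_sub]
  rw [this, det_smul, Fintype.card_fin]

theorem det_one_sub_smul_star_eq (u : unitaryGroup (Fin N) ℂ) (c : ℂ) :
    (1 - c • star u.1).det = star u.1.det * (aeval u.1 (X - C c)).det := by
  rw [det_aeval_X_sub_C, ← mul_assoc, star_det_mul_det, one_mul]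

theorem integral_prod_charpoly_ratio_eq_kernelMoment {a : Fin (p + q) → ℂ} (ha : ∀ k, a k ≠ 0)
    (μ : Measure (unitaryGroup (Fin N) ℂ)) :
    ∫ u, (∏ j, (1 - a (Fin.castAdd q j) • u.1).det / (1 - x j • u.1).det) *
        ∏ l, (1 - (a (Fin.natAdd p l))⁻¹ • star u.1).det / (1 - y l • star u.1).det ∂μ =
      (∏ j, (-a (Fin.castAdd q j)) ^ N) * kernelMoment μ x y q (∏ k, (X - C (a k)⁻¹)) := by
  rw [kernelMoment, ← integral_const_mul]
  refine integral_congr_ae (.of_forall fun u => ?_)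
  simp only [map_mul, det_mul, det_aeval_prod, Fin.prod_univ_add, div_eq_mul_inv,
    Finset.prod_mul_distrib, det_one_sub_smul_eq u.1 (ha _), det_one_sub_smul_star_eq u (a _)⁻¹,
    Finset.prod_const, Finset.card_univ, Fintype.card_fin]
  ring

theorem inv_sub_mul_one_sub_mul_inv_sub_inv {K : Type*} [Field K] {t : K} (ht : t ≠ 0)
    (s c d : K) :
    (t⁻¹ - d) * (1 - c * s) * (s - t⁻¹)⁻¹ = -((1 - c * s) * (1 - t * d) / (1 - t * s)) := by
  have left : t⁻¹ - d = t⁻¹ * (1 - t * d) := by field_simp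
  have right : s - t⁻¹ = -t⁻¹ * (1 - t * s) := by field_simp; ring
  rw [left, right, mul_inv, inv_neg, inv_inv]
  field_simp

theorem prod_perm_pow_mul_inv {K : Type*} [Field K] {a : Fin (p + q) → K} (ha : ∀ k, a k ≠ 0)
    (w : Equiv.Perm (Fin (p + q))) (N : ℕ) :
    (∏ l, a (Fin.natAdd p l) ^ N) * (∏ j, (-a (Fin.castAdd q j)) ^ N) *
        ∏ j, (a (w (Fin.castAdd q j)))⁻¹ ^ N =
      (-1) ^ (p * N) * ∏ l, a (w (Fin.natAdd p l)) ^ N := by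
  have prod_perm : (∏ j, a (w (Fin.castAdd q j))) * (∏ l, a (w (Fin.natAdd p l))) =
      (∏ j, a (Fin.castAdd q j)) * ∏ l, a (Fin.natAdd p l) := by
    rw [← Fin.prod_univ_add fun k => a (w k), ← Fin.prod_univ_add a, Equiv.prod_comp w a]
  have cancel : (∏ j, a (w (Fin.castAdd q j))) * ∏ j, (a (w (Fin.castAdd q j)))⁻¹ = 1 := by
    rw [← Finset.prod_mul_distrib]
    exact Finset.prod_eq_one fun j _ => mul_inv_cancel₀ (ha _)
  simp only [neg_pow (a _), Finset.prod_mul_distrib, Finset.prod_pow, Finset.prod_const,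
    Finset.card_univ, Fintype.card_fin, ← pow_mul]
  calc _ = (-1) ^ (p * N) * (((∏ j, a (Fin.castAdd q j)) * ∏ l, a (Fin.natAdd p l)) *
        ∏ j, (a (w (Fin.castAdd q j)))⁻¹) ^ N := by ring
    _ = (-1) ^ (p * N) * (((∏ j, a (w (Fin.castAdd q j))) * ∏ j, (a (w (Fin.castAdd q j)))⁻¹) *
        ∏ l, a (w (Fin.natAdd p l))) ^ N := by rw [← prod_perm]; ring
    _ = _ := by rw [cancel, one_mul]

theorem prod_perm_weight_inv {K : Type*} [Field K] (x : Fin p → K) (y : Fin q → K)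
    {a : Fin (p + q) → K} (ha : ∀ k, a k ≠ 0) (w : Equiv.Perm (Fin (p + q))) (N : ℕ) :
    (∏ l, a (Fin.natAdd p l) ^ N) * (∏ j, (-a (Fin.castAdd q j)) ^ N) *
        ((∏ j, (∏ l, ((a (w (Fin.castAdd q j)))⁻¹ - y l)) * (a (w (Fin.castAdd q j)))⁻¹ ^ N) *
          (∏ l, ∏ j, (1 - x j * (a (w (Fin.natAdd p l)))⁻¹)) *
            ∏ l, ∏ j, ((a (w (Fin.natAdd p l)))⁻¹ - (a (w (Fin.castAdd q j)))⁻¹)⁻¹) =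
      (-1) ^ (p * (q + N)) * ∏ l, a (w (Fin.natAdd p l)) ^ N * ∏ j,
        (1 - x j * (a (w (Fin.natAdd p l)))⁻¹) * (1 - a (w (Fin.castAdd q j)) * y l) /
          (1 - a (w (Fin.castAdd q j)) * (a (w (Fin.natAdd p l)))⁻¹) := by
  have double_prod : (∏ j, ∏ l, ((a (w (Fin.castAdd q j)))⁻¹ - y l)) *
      (∏ l, ∏ j, (1 - x j * (a (w (Fin.natAdd p l)))⁻¹)) *
        ∏ l, ∏ j, ((a (w (Fin.natAdd p l)))⁻¹ - (a (w (Fin.castAdd q j)))⁻¹)⁻¹ =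
      (-1) ^ (p * q) * ∏ l, ∏ j, (1 - x j * (a (w (Fin.natAdd p l)))⁻¹) *
        (1 - a (w (Fin.castAdd q j)) * y l) /
          (1 - a (w (Fin.castAdd q j)) * (a (w (Fin.natAdd p l)))⁻¹) := by
    rw [Finset.prod_comm]
    simp only [← Finset.prod_mul_distrib, inv_sub_mul_one_sub_mul_inv_sub_inv (ha _)]
    simp only [Finset.prod_neg]
    rw [Finset.prod_mul_distrib]
    simp [pow_mul]
  have powers := prod_perm_pow_mul_inv ha w N
  rw [Finset.prod_mul_distrib, Finset.prod_mul_distrib, mul_add, pow_add]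
  linear_combination ((∏ j, ∏ l, ((a (w (Fin.castAdd q j)))⁻¹ - y l)) *
    (∏ l, ∏ j, (1 - x j * (a (w (Fin.natAdd p l)))⁻¹)) *
      ∏ l, ∏ j, ((a (w (Fin.natAdd p l)))⁻¹ - (a (w (Fin.castAdd q j)))⁻¹)⁻¹) * powers +
    (-1) ^ (p * N) * (∏ l, a (w (Fin.natAdd p l)) ^ N) * double_prod

theorem prod_prod_one_sub_mul_ne_zero (hx : ∀ j, ‖x j‖ < 1) (hy : ∀ l, ‖y l‖ < 1) :
    ∏ l, ∏ j, (1 - x j * y l) ≠ 0 := by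
  refine Finset.prod_ne_zero_iff.mpr fun l _ => Finset.prod_ne_zero_iff.mpr fun j _ =>
    sub_ne_zero.mpr fun one_eq => ?_
  have := mul_lt_one_of_nonneg_of_lt_one_left (norm_nonneg _) (hx j) (hy l).le
  rw [← norm_mul, ← one_eq, norm_one] at this
  exact lt_irrefl _ this

theorem prod_perm_ratio_eq_div (hx : ∀ j, ‖x j‖ < 1) (hy : ∀ l, ‖y l‖ < 1)
    {a : Fin (p + q) → ℂ} (ha : ∀ k, a k ≠ 0) (w : Equiv.Perm (Fin (p + q))) (N : ℕ) :
    ∏ l, (a (w (Fin.natAdd p l)) * y l) ^ N * ∏ j,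
        (1 - x j * (a (w (Fin.natAdd p l)))⁻¹) * (1 - a (w (Fin.castAdd q j)) * y l) /
          ((1 - a (w (Fin.castAdd q j)) * (a (w (Fin.natAdd p l)))⁻¹) * (1 - x j * y l)) =
      (∏ l, y l ^ N) * ((-1) ^ (p * (q + N)) *
        ((∏ l, a (Fin.natAdd p l) ^ N) * (∏ j, (-a (Fin.castAdd q j)) ^ N) *
        ((∏ j, (∏ l, ((a (w (Fin.castAdd q j)))⁻¹ - y l)) * (a (w (Fin.castAdd q j)))⁻¹ ^ N) *
          (∏ l, ∏ j, (1 - x j * (a (w (Fin.natAdd p l)))⁻¹)) *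
            ∏ l, ∏ j, ((a (w (Fin.natAdd p l)))⁻¹ - (a (w (Fin.castAdd q j)))⁻¹)⁻¹))) /
        ∏ l, ∏ j, (1 - x j * y l) := by
  have sign_mul_self : (-1 : ℂ) ^ (p * (q + N)) * (-1) ^ (p * (q + N)) = 1 := by
    rw [← mul_pow, neg_one_mul, neg_neg, one_pow]
  have resultant_ne_zero := prod_prod_one_sub_mul_ne_zero hx hy
  rw [prod_perm_weight_inv x y ha, ← mul_assoc ((-1 : ℂ) ^ _), sign_mul_self, one_mul,
    eq_div_iff resultant_ne_zero, ← Finset.prod_mul_distrib, ← Finset.prod_mul_distrib]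
  refine Finset.prod_congr rfl fun l hl => ?_
  have := Finset.prod_ne_zero_iff.mp resultant_ne_zero l hl
  simp only [div_mul_eq_div_div, Finset.prod_div_distrib (g := fun j => 1 - x j * y l), mul_pow]
  rw [mul_assoc, div_mul_cancel₀ _ this]
  ring

theorem integral_prod_charpoly_ratio (hx : ∀ j, ‖x j‖ < 1) (hy : ∀ l, ‖y l‖ < 1)
    {a : Fin (p + q) → ℂ} (ha : ∀ k, a k ≠ 0) (ha_inj : Function.Injective a)
    (μ : Measure (unitaryGroup (Fin N) ℂ)) [IsProbabilityMeasure μ] [μ.IsMulLeftInvariant] :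
    (∏ l, (a (Fin.natAdd p l) * y l) ^ N) *
        ∫ u, (∏ j, (1 - a (Fin.castAdd q j) • u.1).det / (1 - x j • u.1).det) *
          ∏ l, (1 - (a (Fin.natAdd p l))⁻¹ • star u.1).det / (1 - y l • star u.1).det ∂μ =
      1 / (p.factorial * q.factorial) * ∑ w : Equiv.Perm (Fin (p + q)),
        ∏ l, (a (w (Fin.natAdd p l)) * y l) ^ N * ∏ j,
          (1 - x j * (a (w (Fin.natAdd p l)))⁻¹) * (1 - a (w (Fin.castAdd q j)) * y l) /
            ((1 - a (w (Fin.castAdd q j)) * (a (w (Fin.natAdd p l)))⁻¹) * (1 - x j * y l)) := by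
  have sign_mul_self : (-1 : ℂ) ^ (p * (q + N)) * (-1) ^ (p * (q + N)) = 1 := by
    rw [← mul_pow, neg_one_mul, neg_neg, one_pow]
  have kernel := factorial_mul_factorial_mul_resultant_mul_kernelMoment hx hy
    (inv_injective.comp ha_inj) μ
  simp only [Function.comp_apply] at kernel
  have factorial_ne_zero : (p.factorial * q.factorial : ℂ) ≠ 0 := by
    exact_mod_cast (mul_pos p.factorial_pos q.factorial_pos).ne'
  have sum_eq := Finset.sum_congr rfl fun w (_ : w ∈ Finset.univ) =>
    prod_perm_ratio_eq_div hx hy ha w N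
  rw [sum_eq, ← Finset.sum_div, ← Finset.mul_sum, ← Finset.mul_sum, ← Finset.mul_sum, ← kernel,
    integral_prod_charpoly_ratio_eq_kernelMoment ha, one_div,
    eq_inv_mul_iff_mul_eq₀ factorial_ne_zero, eq_div_iff (prod_prod_one_sub_mul_ne_zero hx hy)]
  simp only [mul_pow, Finset.prod_mul_distrib]
  linear_combination -(∏ l, ∏ j, (1 - x j * y l)) * p.factorial * q.factorial *
    (∏ l, a (Fin.natAdd p l) ^ N) * (∏ l, y l ^ N) * (∏ j, (-a (Fin.castAdd q j)) ^ N) *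
      kernelMoment μ x y q (∏ k, (X - C (a k)⁻¹)) * sign_mul_self

end Ratios

section Fin

variable {M : Type*} [CommMonoid M] {p q : ℕ}

theorem prod_filter_val_lt (f : Fin (p + q) → M) :
    ∏ k with k.val < p, f k = ∏ j, f (Fin.castAdd q j) := by
  simp [Finset.prod_filter, Fin.prod_univ_add]

@[to_additive]
theorem prod_filter_le_val (f : Fin (p + q) → M) :
    ∏ k with p ≤ k.val, f k = ∏ l, f (Fin.natAdd p l) := by
  simp [Finset.prod_filter, Fin.prod_univ_add, Nat.not_le.mpr]

end Fin

theorem det_one_sub_smul_map_conj {n : Type*} [Fintype n] [DecidableEq n] (c : ℂ)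
    (u : Matrix n n ℂ) : (1 - c • u.map (starRingEnd ℂ)).det = (1 - c • star u).det := by
  rw [← det_transpose, transpose_sub, transpose_one, transpose_smul]
  rfl

end CharpolyRatios

/-- **Theorem 1.1 (main theorem)**: the Haar-average over `U(N)` of the product of
ratios of characteristic polynomials, with `p` factors involving `u` and `q` conjugate
factors involving `ū`, multiplied by `e^{λ_N}`, equals the supersymmetric Weyl-type
character formula. -/
theorem autocorrelation_ratios_charpoly_unitary
    (N p q : ℕ) (hN : 1 ≤ N) (hp : 1 ≤ p) (hq : 1 ≤ q)
    (ψ φ : Fin (p + q) → ℂ)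
    (hφneg : ∀ j : Fin (p + q), (j : ℕ) < p → (φ j).re < 0)
    (hφpos : ∀ l : Fin (p + q), p ≤ (l : ℕ) → 0 < (φ l).re)
    (hdist : Function.Injective fun k : Fin (p + q) => Complex.exp (Complex.I * ψ k))
    (μ : Measure (Matrix.unitaryGroup (Fin N) ℂ))
    [μ.IsHaarMeasure] [IsProbabilityMeasure μ] :
    (∫ u : Matrix.unitaryGroup (Fin N) ℂ,
      Complex.exp ((N : ℂ) *
          ∑ l ∈ Finset.univ.filter (fun l : Fin (p + q) => p ≤ (l : ℕ)),
            (Complex.I * ψ l - φ l)) *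
        (∏ j ∈ Finset.univ.filter (fun j : Fin (p + q) => (j : ℕ) < p),
          Matrix.det (1 - Complex.exp (Complex.I * ψ j) • (u : Matrix (Fin N) (Fin N) ℂ)) /
            Matrix.det (1 - Complex.exp (φ j) • (u : Matrix (Fin N) (Fin N) ℂ))) *
        (∏ l ∈ Finset.univ.filter (fun l : Fin (p + q) => p ≤ (l : ℕ)),
          Matrix.det (1 - Complex.exp (-(Complex.I * ψ l)) •
              ((u : Matrix (Fin N) (Fin N) ℂ).map (starRingEnd ℂ))) /
            Matrix.det (1 - Complex.exp (-(φ l)) •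
              ((u : Matrix (Fin N) (Fin N) ℂ).map (starRingEnd ℂ)))) ∂μ)
    = (1 / ((p.factorial : ℂ) * (q.factorial : ℂ))) *
        ∑ w : Equiv.Perm (Fin (p + q)),
          ∏ l ∈ Finset.univ.filter (fun l : Fin (p + q) => p ≤ (l : ℕ)),
            (Complex.exp ((N : ℂ) * (Complex.I * ψ (w l) - φ l)) *
              ∏ j ∈ Finset.univ.filter (fun j : Fin (p + q) => (j : ℕ) < p),
                ((1 - Complex.exp (φ j - Complex.I * ψ (w l))) *
                    (1 - Complex.exp (Complex.I * ψ (w j) - φ l))) /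
                  ((1 - Complex.exp (Complex.I * ψ (w j) - Complex.I * ψ (w l))) *
                    (1 - Complex.exp (φ j - φ l)))) := by
  have norm_x_lt_one (j : Fin p) : ‖Complex.exp (φ (Fin.castAdd q j))‖ < 1 := by
    rw [Complex.norm_exp, Real.exp_lt_one_iff]
    exact hφneg _ j.2
  have norm_y_lt_one (l : Fin q) : ‖Complex.exp (-φ (Fin.natAdd p l))‖ < 1 := by
    rw [Complex.norm_exp, Complex.neg_re, Real.exp_lt_one_iff, neg_lt_zero]
    exact hφpos _ (Nat.le_add_right p l)
  have ratio := CharpolyRatios.integral_prod_charpoly_ratio norm_x_lt_one norm_y_lt_one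
    (fun _ => Complex.exp_ne_zero _) hdist μ
  simp only [CharpolyRatios.prod_filter_val_lt, CharpolyRatios.prod_filter_le_val,
    CharpolyRatios.sum_filter_le_val, CharpolyRatios.det_one_sub_smul_map_conj,
    mul_assoc (Complex.exp _), integral_const_mul]
  simp only [sub_eq_add_neg (Complex.I * ψ _), sub_eq_add_neg (φ _), Finset.mul_sum,
    Complex.exp_sum, Complex.exp_nat_mul, Complex.exp_add, Complex.exp_neg] at ratio ⊢
  exact ratio
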